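/- The graph of a minimizer above any open set of differentiability contains no extreme points of the associated convex body: if u : Ω → [0, M] is concave and minimizes J over all concave functions v : Ω → [0, M], K = cl{(x, z) ∈ Ω × ℝ : 0 ≤ z ≤ u(x)} is the associated convex body, and ω ⊆ Ω is an open set such that u is differentiable at every point of ω, then for every x ∈ ω the point (x, u(x)) ∈ ℝ³ is not an extreme point of K. -/

import Mathlib

open Set MeasureTheory

/-- The open unit disc in `ℝ²`. -/
noncomputable def Omega : Set (EuclideanSpace ℝ (Fin 2)) :=
  Metric.ball (0 : EuclideanSpace ℝ (Fin 2)) 1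

/-- Newton's resistance functional `J(u) = ∫_Ω 1/(|∇u|² + 1) dx`. -/
noncomputable def J (u : EuclideanSpace ℝ (Fin 2) → ℝ) : ℝ :=
  ∫ x in Omega, 1 / (‖gradient u x‖ ^ 2 + 1)

/-- The convex body in `ℝ³ ≅ ℝ² × ℝ` associated with `u : Ω → [0, M]`:
`K = cl {(x, z) : x ∈ Ω, 0 ≤ z ≤ u(x)}`. -/
noncomputable def assocBody (u : EuclideanSpace ℝ (Fin 2) → ℝ) :
    Set (EuclideanSpace ℝ (Fin 2) × ℝ) :=
  closure {p : EuclideanSpace ℝ (Fin 2) × ℝ |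
    p.1 ∈ Omega ∧ 0 ≤ p.2 ∧ p.2 ≤ u p.1}

section

open scoped ContDiff Topology
open Filter Metric

/-- The Euclidean plane. -/
abbrev E2 := EuclideanSpace ℝ (Fin 2)

/-- The standard basis vectors of the plane. -/
noncomputable def bvec (i : Fin 2) : E2 := EuclideanSpace.single i 1

/-- Partial derivatives of a function on the plane. -/
noncomputable def pd (i : Fin 2) (f : E2 → ℝ) : E2 → ℝ := fun ξ => fderiv ℝ f ξ (bvec i)

/-- The polarised Hessian determinant `a₁₁ b₂₂ + a₂₂ b₁₁ - 2 a₁₂ b₁₂`. -/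
noncomputable def mixedHess (a b : E2 → ℝ) : E2 → ℝ := fun ξ =>
  pd 0 (pd 0 a) ξ * pd 1 (pd 1 b) ξ + pd 1 (pd 1 a) ξ * pd 0 (pd 0 b) ξ
    - 2 * pd 0 (pd 1 a) ξ * pd 0 (pd 1 b) ξ

/-- The Hessian determinant. -/
noncomputable def hessDet (a : E2 → ℝ) : E2 → ℝ := fun ξ =>
  pd 0 (pd 0 a) ξ * pd 1 (pd 1 a) ξ - pd 0 (pd 1 a) ξ ^ 2

theorem contDiff_pd {f : E2 → ℝ} (hf : ContDiff ℝ ∞ f) (i : Fin 2) : ContDiff ℝ ∞ (pd i f) :=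
  (hf.fderiv_right (m := ∞) le_rfl).clm_apply contDiff_const

theorem smooth_diff {f : E2 → ℝ} (hf : ContDiff ℝ ∞ f) : Differentiable ℝ f :=
  hf.differentiable (by simp)

theorem pd_add {f g : E2 → ℝ} (hf : Differentiable ℝ f) (hg : Differentiable ℝ g) (i : Fin 2) :
    pd i (fun ξ => f ξ + g ξ) = fun ξ => pd i f ξ + pd i g ξ := by
  funext ξ
  simp [pd, fderiv_fun_add (hf ξ) (hg ξ)]

theorem pd_sub {f g : E2 → ℝ} (hf : Differentiable ℝ f) (hg : Differentiable ℝ g) (i : Fin 2) :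
    pd i (fun ξ => f ξ - g ξ) = fun ξ => pd i f ξ - pd i g ξ := by
  funext ξ
  simp [pd, fderiv_fun_sub (hf ξ) (hg ξ)]

theorem pd_const_mul {f : E2 → ℝ} (hf : Differentiable ℝ f) (c : ℝ) (i : Fin 2) :
    pd i (fun ξ => c * f ξ) = fun ξ => c * pd i f ξ := by
  funext ξ
  simp [pd, fderiv_const_mul (hf ξ)]

theorem pd_mul {f g : E2 → ℝ} (hf : Differentiable ℝ f) (hg : Differentiable ℝ g) (i : Fin 2) :
    pd i (fun ξ => f ξ * g ξ) = fun ξ => pd i f ξ * g ξ + f ξ * pd i g ξ := by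
  funext ξ
  simp [pd, fderiv_fun_mul (hf ξ) (hg ξ)]; ring

theorem pd_comm {f : E2 → ℝ} (hf : ContDiff ℝ ∞ f) (i j : Fin 2) :
    pd i (pd j f) = pd j (pd i f) := by
  funext ξ
  have hs : IsSymmSndFDerivAt ℝ f ξ := hf.contDiffAt.isSymmSndFDerivAt (by
    simp only [minSmoothness_of_isRCLikeNormedField]; exact WithTop.coe_le_coe.2 (le_top : (2 : ℕ∞) ≤ ⊤))
  have hd : DifferentiableAt ℝ (fderiv ℝ f) ξ :=
    (hf.fderiv_right (m := ∞) le_rfl).differentiable (by simp) ξ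
  have key : ∀ k l : Fin 2, pd k (pd l f) ξ = fderiv ℝ (fderiv ℝ f) ξ (bvec k) (bvec l) := by
    intro k l
    change fderiv ℝ (fun y => fderiv ℝ f y (bvec l)) ξ (bvec k) = _
    rw [fderiv_clm_apply hd (differentiableAt_const _)]
    simp
  rw [key, key]
  exact hs _ _

theorem hasCompactSupport_pd {f : E2 → ℝ} (hf : HasCompactSupport f) (i : Fin 2) :
    HasCompactSupport (pd i f) := hf.fderiv_apply ℝ (bvec i)

theorem tsupport_pd_subset (f : E2 → ℝ) (i : Fin 2) : tsupport (pd i f) ⊆ tsupport f :=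
  (tsupport_fderiv_apply_subset ℝ (bvec i))

theorem integral_pd_eq_zero {f : E2 → ℝ} (hf : ContDiff ℝ ∞ f) (hc : HasCompactSupport f)
    (i : Fin 2) : ∫ ξ, pd i f ξ = 0 := by
  have hi : Integrable (pd i f) :=
    (contDiff_pd hf i).continuous.integrable_of_hasCompactSupport (hasCompactSupport_pd hc i)
  have := integral_mul_fderiv_eq_neg_fderiv_mul_of_integrable (μ := (volume : Measure E2))
    (f := fun _ => (1 : ℝ)) (g := f) (v := bvec i) (by simp) (by simp only [one_mul]; exact hi)
    (by simpa using hf.continuous.integrable_of_hasCompactSupport hc)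
    (by intros; fun_prop) (fun ξ _ => smooth_diff hf ξ)
  simpa [pd] using this

theorem contDiff_mixedHess {a b : E2 → ℝ} (ha : ContDiff ℝ ∞ a) (hb : ContDiff ℝ ∞ b) :
    ContDiff ℝ ∞ (mixedHess a b) := by
  have h := fun f (hf : ContDiff ℝ ∞ f) i j => contDiff_pd (contDiff_pd hf i) j
  have h1 := h a ha; have h2 := h b hb
  exact (((h1 0 0).mul (h2 1 1)).add ((h1 1 1).mul (h2 0 0))).sub
    ((contDiff_const.mul (h1 1 0)).mul (h2 1 0))

theorem mixedHess_eq_zero_of_notMem {a b : E2 → ℝ} {ξ : E2} (h : ξ ∉ tsupport b) :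
    mixedHess a b ξ = 0 := by
  have : ∀ i j, pd i (pd j b) ξ = 0 := fun i j => image_eq_zero_of_notMem_tsupport
    fun hh => h (tsupport_pd_subset _ _ (tsupport_pd_subset _ _ hh))
  simp [mixedHess, this]

theorem mixedHess_comm (a b : E2 → ℝ) : mixedHess a b = mixedHess b a := by
  funext ξ; simp only [mixedHess]; ring

/-- Integration by parts: the trilinear form `∫ a (b₁₁ c₂₂ + b₂₂ c₁₁ - 2 b₁₂ c₁₂)` is symmetric. -/
theorem integral_mixedHess_symm {a b c : E2 → ℝ} (ha : ContDiff ℝ ∞ a) (hb : ContDiff ℝ ∞ b)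
    (hc : ContDiff ℝ ∞ c) (hs : HasCompactSupport a) :
    ∫ ξ, b ξ * mixedHess a c ξ = ∫ ξ, a ξ * mixedHess b c ξ := by
  have sa := contDiff_pd ha; have sb := contDiff_pd hb; have sc := contDiff_pd hc
  have sac := fun i => hasCompactSupport_pd hs i
  have scc := fun i j => contDiff_pd (sc i) j
  set W : Fin 2 → E2 → ℝ := fun i ξ => b ξ * pd i a ξ - a ξ * pd i b ξ with hW
  have sW : ∀ i, ContDiff ℝ ∞ (W i) := fun i => (hb.mul (sa i)).sub (ha.mul (sb i))
  have cW : ∀ i, HasCompactSupport (W i) := fun i => (sac i).mul_left.sub hs.mul_right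
  set V0 : E2 → ℝ := fun ξ => W 0 ξ * pd 1 (pd 1 c) ξ - W 1 ξ * pd 0 (pd 1 c) ξ with hV0
  set V1 : E2 → ℝ := fun ξ => W 1 ξ * pd 0 (pd 0 c) ξ - W 0 ξ * pd 0 (pd 1 c) ξ with hV1
  have sV0 : ContDiff ℝ ∞ V0 := ((sW 0).mul (scc 1 1)).sub ((sW 1).mul (scc 1 0))
  have sV1 : ContDiff ℝ ∞ V1 := ((sW 1).mul (scc 0 0)).sub ((sW 0).mul (scc 1 0))
  have cV0 : HasCompactSupport V0 := (cW 0).mul_right.sub (cW 1).mul_right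
  have cV1 : HasCompactSupport V1 := (cW 1).mul_right.sub (cW 0).mul_right
  have key : ∀ ξ, b ξ * mixedHess a c ξ - a ξ * mixedHess b c ξ = pd 0 V0 ξ + pd 1 V1 ξ := by
    intro ξ
    have d := @smooth_diff
    have dW : ∀ i j, pd j (W i) = fun ξ => (pd j b ξ * pd i a ξ + b ξ * pd j (pd i a) ξ)
        - (pd j a ξ * pd i b ξ + a ξ * pd j (pd i b) ξ) := by
      intro i j
      rw [hW, pd_sub (d (hb.mul (sa i))) (d (ha.mul (sb i))), pd_mul (d hb) (d (sa i)),
        pd_mul (d ha) (d (sb i))]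
    rw [hV0, hV1, pd_sub (d ((sW 0).mul (scc 1 1))) (d ((sW 1).mul (scc 1 0))),
      pd_sub (d ((sW 1).mul (scc 0 0))) (d ((sW 0).mul (scc 1 0))),
      pd_mul (d (sW 0)) (d (scc 1 1)), pd_mul (d (sW 1)) (d (scc 1 0)),
      pd_mul (d (sW 1)) (d (scc 0 0)), pd_mul (d (sW 0)) (d (scc 1 0)),
      dW, dW, dW, dW, pd_comm ha 1 0, pd_comm hb 1 0, pd_comm (sc 1) 1 0,
      pd_comm (sc 0) 1 0, pd_comm hc 1 0]
    simp only [mixedHess, hW]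
    ring
  have i0 : Integrable (pd 0 V0) := (contDiff_pd sV0 0).continuous.integrable_of_hasCompactSupport
    (hasCompactSupport_pd cV0 0)
  have i1 : Integrable (pd 1 V1) := (contDiff_pd sV1 1).continuous.integrable_of_hasCompactSupport
    (hasCompactSupport_pd cV1 1)
  have ia : Integrable (fun ξ => a ξ * mixedHess b c ξ) :=
    (ha.mul (contDiff_mixedHess hb hc)).continuous.integrable_of_hasCompactSupport hs.mul_right
  have ib : Integrable (fun ξ => b ξ * mixedHess a c ξ) := by
    refine (hb.mul (contDiff_mixedHess ha hc)).continuous.integrable_of_hasCompactSupport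
      (HasCompactSupport.intro hs fun ξ hξ => ?_)
    rw [mixedHess_comm, mixedHess_eq_zero_of_notMem hξ, mul_zero]
  rw [← sub_eq_zero, ← integral_sub ib ia]
  simp_rw [key]
  rw [integral_add i0 i1, integral_pd_eq_zero sV0 cV0, integral_pd_eq_zero sV1 cV1, add_zero]

theorem ConvexOn.add_fderiv_le {S : Set E2} {f : E2 → ℝ} (hf : ConvexOn ℝ S f) {x y : E2}
    {f' : E2 →L[ℝ] ℝ} (hx : x ∈ S) (hy : y ∈ S) (hd : HasFDerivAt f f' x) :
    f x + f' (y - x) ≤ f y := by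
  have hc := hf.comp_affineMap (AffineMap.lineMap (k := ℝ) x y)
  have hd' : HasDerivAt (f ∘ AffineMap.lineMap (k := ℝ) x y) (f' (y - x)) 0 := by
    have h1 : HasDerivAt (AffineMap.lineMap (k := ℝ) x y) (y - x) (0 : ℝ) :=
      AffineMap.hasDerivAt_lineMap
    refine HasFDerivAt.comp_hasDerivAt (0 : ℝ) ?_ h1
    simpa using hd
  have := hc.le_slope_of_hasDerivAt (x := 0) (y := 1) (by simpa using hx) (by simpa using hy)
    one_pos hd'
  simp only [slope_def_field, Function.comp_apply, AffineMap.lineMap_apply_zero,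
    AffineMap.lineMap_apply_one, sub_zero, div_one] at this
  linarith

theorem fderiv_apply_eq_pd (f : E2 → ℝ) (ξ v : E2) :
    fderiv ℝ f ξ v = v 0 * pd 0 f ξ + v 1 * pd 1 f ξ := by
  have : v = v 0 • bvec 0 + v 1 • bvec 1 := by
    ext i; fin_cases i <;> simp [bvec]
  conv_lhs => rw [this]
  simp [pd]

theorem convex_hess_nonneg {f : E2 → ℝ} (hf : ContDiff ℝ ∞ f) (hc : ConvexOn ℝ univ f) (ξ : E2)
    (s t : ℝ) :
    0 ≤ s ^ 2 * pd 0 (pd 0 f) ξ + 2 * s * t * pd 0 (pd 1 f) ξ + t ^ 2 * pd 1 (pd 1 f) ξ := by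
  set v : E2 := s • bvec 0 + t • bvec 1 with hv
  have hv0 : v 0 = s := by simp [hv, bvec]
  have hv1 : v 1 = t := by simp [hv, bvec]
  set k : E2 → ℝ := fun η => s * pd 0 f η + t * pd 1 f η with hk
  have hkf : ∀ η, k η = fderiv ℝ f η v := fun η => by rw [fderiv_apply_eq_pd, hv0, hv1]
  have d := @smooth_diff
  have dk : Differentiable ℝ k :=
    ((d (contDiff_pd hf 0)).const_mul s).add ((d (contDiff_pd hf 1)).const_mul t)
  have hval : fderiv ℝ k ξ v = s ^ 2 * pd 0 (pd 0 f) ξ + 2 * s * t * pd 0 (pd 1 f) ξ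
      + t ^ 2 * pd 1 (pd 1 f) ξ := by
    rw [fderiv_apply_eq_pd, hv0, hv1, hk,
      pd_add ((d (contDiff_pd hf 0)).const_mul s) ((d (contDiff_pd hf 1)).const_mul t),
      pd_add ((d (contDiff_pd hf 0)).const_mul s) ((d (contDiff_pd hf 1)).const_mul t),
      pd_const_mul (d (contDiff_pd hf 0)), pd_const_mul (d (contDiff_pd hf 1)),
      pd_const_mul (d (contDiff_pd hf 0)), pd_const_mul (d (contDiff_pd hf 1)), pd_comm hf 1 0]
    ring
  rw [← hval]
  have hline : HasDerivAt (fun r : ℝ => k (ξ + r • v)) (fderiv ℝ k ξ v) 0 := by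
    have h1 : HasDerivAt (fun r : ℝ => ξ + r • v) v (0 : ℝ) := by
      simpa using ((hasDerivAt_id (0 : ℝ)).smul_const v).const_add ξ
    refine HasFDerivAt.comp_hasDerivAt (l := k) (l' := fderiv ℝ k ξ) (0 : ℝ) ?_ h1
    simpa using (dk ξ).hasFDerivAt
  have hmono : Monotone fun r : ℝ => k (ξ + r • v) := by
    intro a b hab
    rcases hab.eq_or_lt with rfl | hab
    · exact le_rfl
    have e1 := hc.add_fderiv_le (mem_univ (ξ + a • v)) (mem_univ (ξ + b • v))
      (d hf _).hasFDerivAt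
    have e2 := hc.add_fderiv_le (mem_univ (ξ + b • v)) (mem_univ (ξ + a • v))
      (d hf _).hasFDerivAt
    have r1 : ξ + b • v - (ξ + a • v) = (b - a) • v := by module
    have r2 : ξ + a • v - (ξ + b • v) = (-(b - a)) • v := by module
    rw [r1, map_smul, smul_eq_mul, ← hkf] at e1
    rw [r2, map_smul, smul_eq_mul, ← hkf] at e2
    have : 0 ≤ (b - a) * (k (ξ + b • v) - k (ξ + a • v)) := by linarith
    have := nonneg_of_mul_nonneg_right this (sub_pos.2 hab)
    simpa using this
  rw [← hline.deriv]
  exact hmono.deriv_nonneg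

theorem hessDet_nonneg {f : E2 → ℝ} (hf : ContDiff ℝ ∞ f) (hc : ConvexOn ℝ univ f) (ξ : E2) :
    0 ≤ hessDet f ξ := by
  have h := convex_hess_nonneg hf hc ξ
  unfold hessDet
  set a := pd 0 (pd 0 f) ξ
  set b := pd 0 (pd 1 f) ξ
  set c := pd 1 (pd 1 f) ξ
  have ha : 0 ≤ a := by simpa using h 1 0
  have hcc : 0 ≤ c := by simpa using h 0 1
  have h1 := h b (-a)
  have h2 := h c (-b)
  have h3 := h 1 1
  have h4 := h 1 (-1)
  rcases ha.eq_or_lt with h0 | h0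
  · rw [← h0] at h1 h2 h3 h4 ⊢
    by_contra hb
    have hb : 0 < b ^ 2 := by nlinarith
    have h5 := h (-(c + 1) / (2 * b)) 1
    have hb0 : b ≠ 0 := fun hz => by rw [hz] at hb; simp at hb
    rw [← h0] at h5
    have : 2 * (-(c + 1) / (2 * b)) * 1 * b = -(c + 1) := by field_simp
    rw [this] at h5
    linarith
  · have : 0 ≤ a * (a * c - b ^ 2) := by nlinarith
    exact nonneg_of_mul_nonneg_right this h0

theorem abs_mixedHess_le {a f : E2 → ℝ} (hf : ContDiff ℝ ∞ f) (hc : ConvexOn ℝ univ f) {ξ : E2}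
    {C : ℝ} (h00 : |pd 0 (pd 0 a) ξ| ≤ C) (h11 : |pd 1 (pd 1 a) ξ| ≤ C)
    (h01 : |pd 0 (pd 1 a) ξ| ≤ C) :
    |mixedHess a f ξ| ≤ 2 * C * (pd 0 (pd 0 f) ξ + pd 1 (pd 1 f) ξ) := by
  have h := convex_hess_nonneg hf hc ξ
  unfold mixedHess
  set p := pd 0 (pd 0 f) ξ
  set q := pd 0 (pd 1 f) ξ
  set r := pd 1 (pd 1 f) ξ
  have hp : 0 ≤ p := by simpa using h 1 0
  have hr : 0 ≤ r := by simpa using h 0 1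
  have h3 : 0 ≤ p + 2 * q + r := by simpa using h 1 1
  have h4 : 0 ≤ p - 2 * q + r := by have := h 1 (-1); norm_num at this; linarith
  have hq : |2 * q| ≤ p + r := abs_le.2 ⟨by linarith, by linarith⟩
  have e1 : |pd 0 (pd 0 a) ξ * r| ≤ C * r := by
    rw [abs_mul, abs_of_nonneg hr]; exact mul_le_mul_of_nonneg_right h00 hr
  have e2 : |pd 1 (pd 1 a) ξ * p| ≤ C * p := by
    rw [abs_mul, abs_of_nonneg hp]; exact mul_le_mul_of_nonneg_right h11 hp
  have e3 : |2 * pd 0 (pd 1 a) ξ * q| ≤ C * (p + r) := by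
    have : 2 * pd 0 (pd 1 a) ξ * q = pd 0 (pd 1 a) ξ * (2 * q) := by ring
    rw [this, abs_mul]
    exact mul_le_mul h01 hq (abs_nonneg _) ((abs_nonneg _).trans h01)
  have e1 := abs_le.1 e1
  have e2 := abs_le.1 e2
  have e3 := abs_le.1 e3
  exact abs_le.2 ⟨by linarith, by linarith⟩

theorem hessDet_sub {a b : E2 → ℝ} (ha : ContDiff ℝ ∞ a) (hb : ContDiff ℝ ∞ b) (ξ : E2) :
    hessDet a ξ - hessDet b ξ
      = 1 / 2 * mixedHess (fun η => a η - b η) (fun η => a η + b η) ξ := by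
  have d := @smooth_diff
  have e1 : ∀ i j, pd i (pd j (fun η => a η - b η)) ξ = pd i (pd j a) ξ - pd i (pd j b) ξ := by
    intro i j
    rw [pd_sub (d ha) (d hb), pd_sub (d (contDiff_pd ha j)) (d (contDiff_pd hb j))]
  have e2 : ∀ i j, pd i (pd j (fun η => a η + b η)) ξ = pd i (pd j a) ξ + pd i (pd j b) ξ := by
    intro i j
    rw [pd_add (d ha) (d hb), pd_add (d (contDiff_pd ha j)) (d (contDiff_pd hb j))]
  simp only [hessDet, mixedHess, e1, e2]
  ring

/-- The integrand of Newton's functional as a function of the gradient. -/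
noncomputable def newtonF : E2 → ℝ := fun ξ => 1 / (‖ξ‖ ^ 2 + 1)

theorem contDiff_newtonF : ContDiff ℝ ∞ newtonF :=
  contDiff_const.div ((contDiff_norm_sq ℝ).add contDiff_const) fun ξ => by positivity

theorem newtonF_nonneg (ξ : E2) : 0 ≤ newtonF ξ := by unfold newtonF; positivity

theorem newtonF_le_one (ξ : E2) : newtonF ξ ≤ 1 := by
  unfold newtonF
  rw [div_le_one (by positivity)]
  nlinarith [sq_nonneg ‖ξ‖]

theorem pd_half_sq (i : Fin 2) : pd i (fun ξ : E2 => 1 / 2 * ‖ξ‖ ^ 2) = fun ξ => ξ i := by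
  funext ξ
  have h : HasFDerivAt (fun ξ : E2 => ‖ξ‖ ^ 2) (2 • innerSL ℝ ξ) ξ :=
    (hasStrictFDerivAt_norm_sq ξ).hasFDerivAt
  rw [pd, (h.const_mul (1 / 2)).fderiv]
  simp [bvec, EuclideanSpace.inner_single_right]

theorem contDiff_half_sq : ContDiff ℝ ∞ (fun ξ : E2 => 1 / 2 * ‖ξ‖ ^ 2) :=
  contDiff_const.mul (contDiff_norm_sq ℝ)

theorem pd_coord (i j : Fin 2) : pd i (fun ξ : E2 => ξ j) = fun _ => if i = j then 1 else 0 := by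
  funext ξ
  have h : HasFDerivAt (fun ξ : E2 => ξ j) (EuclideanSpace.proj j : E2 →L[ℝ] ℝ) ξ :=
    (EuclideanSpace.proj j : E2 →L[ℝ] ℝ).hasFDerivAt
  rw [pd, h.fderiv]
  simp [bvec, eq_comm]

theorem mixedHess_half_sq (a : E2 → ℝ) (ξ : E2) :
    mixedHess a (fun ξ : E2 => 1 / 2 * ‖ξ‖ ^ 2) ξ = pd 0 (pd 0 a) ξ + pd 1 (pd 1 a) ξ := by
  simp only [mixedHess, pd_half_sq, pd_coord]
  simp

/-- A uniform local `L¹` bound for the second derivatives of smooth convex functions in terms of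
their sup norm. -/
theorem exists_setIntegral_abs_mixedHess_le {a : E2 → ℝ} (ha : ContDiff ℝ ∞ a) (c : E2) (r : ℝ) :
    ∃ C, 0 ≤ C ∧ ∀ (P : E2 → ℝ) (B : ℝ), ContDiff ℝ ∞ P → ConvexOn ℝ univ P →
      (∀ ξ ∈ closedBall c (|r| + 2), |P ξ| ≤ B) →
      ∫ ξ in closedBall c r, |mixedHess a P ξ| ≤ C * B := by
  have hcpt := isCompact_closedBall c (|r| + 2)
  have hb : ∀ i j, ∃ C, ∀ ξ ∈ closedBall c (|r| + 2), |pd i (pd j a) ξ| ≤ C := fun i j =>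
    hcpt.exists_bound_of_continuousOn (contDiff_pd (contDiff_pd ha j) i).continuous.continuousOn
  choose Ca hCa using hb
  set A := max (max (Ca 0 0) (Ca 1 1)) (max (Ca 0 1) 0) with hA
  have hA0 : 0 ≤ A := (le_max_right _ _).trans (le_max_right _ _)
  let ψ : ContDiffBump c := ⟨|r| + 1, |r| + 2, by positivity, by linarith⟩
  have sψ : ContDiff ℝ ∞ (ψ : E2 → ℝ) := ψ.contDiff
  have cψ : HasCompactSupport (ψ : E2 → ℝ) := ψ.hasCompactSupport
  set L : E2 → ℝ := fun ξ => pd 0 (pd 0 ψ) ξ + pd 1 (pd 1 ψ) ξ with hL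
  have sL : Continuous L := (contDiff_pd (contDiff_pd sψ 0) 0).continuous.add
    (contDiff_pd (contDiff_pd sψ 1) 1).continuous
  have cL : HasCompactSupport L := (hasCompactSupport_pd (hasCompactSupport_pd cψ 0) 0).add
    (hasCompactSupport_pd (hasCompactSupport_pd cψ 1) 1)
  have iL : Integrable L := sL.integrable_of_hasCompactSupport cL
  refine ⟨2 * A * ∫ ξ, |L ξ|, by positivity, fun P B hP hPc hB => ?_⟩
  set Δ : E2 → ℝ := fun ξ => pd 0 (pd 0 P) ξ + pd 1 (pd 1 P) ξ with hΔ
  have sΔ : Continuous Δ := (contDiff_pd (contDiff_pd hP 0) 0).continuous.add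
    (contDiff_pd (contDiff_pd hP 1) 1).continuous
  have hΔ0 : ∀ ξ, 0 ≤ Δ ξ := by
    intro ξ
    have h1 := convex_hess_nonneg hP hPc ξ 1 0
    have h2 := convex_hess_nonneg hP hPc ξ 0 1
    simp at h1 h2
    exact add_nonneg h1 h2
  have hsub : closedBall c r ⊆ closedBall c (|r| + 1) :=
    closedBall_subset_closedBall (by linarith [le_abs_self r])
  have hsub2 : closedBall c r ⊆ closedBall c (|r| + 2) :=
    closedBall_subset_closedBall (by linarith [le_abs_self r])
  have h1 : ∫ ξ in closedBall c r, |mixedHess a P ξ| ≤ ∫ ξ in closedBall c r, 2 * A * (ψ ξ * Δ ξ) := by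
    refine setIntegral_mono_on ?_ ?_ measurableSet_closedBall fun ξ hξ => ?_
    · exact (contDiff_mixedHess ha hP).continuous.abs.continuousOn.integrableOn_compact
        (isCompact_closedBall c r)
    · exact ((continuous_const.mul (sψ.continuous.mul sΔ))).continuousOn.integrableOn_compact
        (isCompact_closedBall c r)
    · rw [ψ.one_of_mem_closedBall (hsub hξ), one_mul]
      have hξ2 := hsub2 hξ
      exact abs_mixedHess_le hP hPc
        ((hCa 0 0 ξ hξ2).trans ((le_max_left _ _).trans (le_max_left _ _)))
        ((hCa 1 1 ξ hξ2).trans ((le_max_right _ _).trans (le_max_left _ _)))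
        ((hCa 0 1 ξ hξ2).trans ((le_max_left _ _).trans (le_max_right _ _)))
  have iψ : Integrable fun ξ => 2 * A * (ψ ξ * Δ ξ) :=
    (continuous_const.mul (sψ.continuous.mul sΔ)).integrable_of_hasCompactSupport
      (cψ.mul_right).mul_left
  have h2 : ∫ ξ in closedBall c r, 2 * A * (ψ ξ * Δ ξ) ≤ ∫ ξ, 2 * A * (ψ ξ * Δ ξ) :=
    setIntegral_le_integral iψ (ae_of_all _ fun ξ =>
      mul_nonneg (by positivity) (mul_nonneg ψ.nonneg (hΔ0 ξ)))
  have h3 : ∫ ξ, ψ ξ * Δ ξ = ∫ ξ, P ξ * L ξ := by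
    have := integral_mixedHess_symm sψ hP contDiff_half_sq cψ
    simp only [mixedHess_half_sq] at this
    exact this.symm
  have h4 : ∫ ξ, P ξ * L ξ ≤ ∫ ξ, B * |L ξ| := by
    refine integral_mono ((hP.continuous.mul sL).integrable_of_hasCompactSupport cL.mul_left)
      (iL.abs.const_mul B) fun ξ => ?_
    by_cases hξ : ξ ∈ closedBall c (|r| + 2)
    · calc P ξ * L ξ ≤ |P ξ * L ξ| := le_abs_self _
        _ = |P ξ| * |L ξ| := abs_mul _ _
        _ ≤ B * |L ξ| := mul_le_mul_of_nonneg_right (hB ξ hξ) (abs_nonneg _)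
    · have hz : ∀ i, pd i (pd i ψ) ξ = 0 := fun i => image_eq_zero_of_notMem_tsupport fun hh => by
        have := tsupport_pd_subset _ _ (tsupport_pd_subset _ _ hh)
        rw [ψ.tsupport_eq] at this
        exact hξ this
      simp [hL, hz]
  calc _ ≤ _ := h1
    _ ≤ _ := h2
    _ = 2 * A * ∫ ξ, ψ ξ * Δ ξ := integral_const_mul _ _
    _ ≤ 2 * A * ∫ ξ, B * |L ξ| := by rw [h3]; gcongr
    _ = _ := by rw [integral_const_mul]; ring

/-- Minus the gradient, in coordinates. -/
noncomputable def negGrad (p : E2 → ℝ) : E2 → E2 := fun ξ => !₂[-pd 0 p ξ, -pd 1 p ξ]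

theorem inner_negGrad (p : E2 → ℝ) (ξ v : E2) :
    inner ℝ v (negGrad p ξ) = -fderiv ℝ p ξ v := by
  rw [fderiv_apply_eq_pd]
  simp [negGrad, PiLp.inner_apply, Fin.sum_univ_two]
  ring

theorem differentiable_negGrad {p : E2 → ℝ} (hp : ContDiff ℝ ∞ p) :
    Differentiable ℝ (negGrad p) := by
  intro ξ
  rw [differentiableAt_euclidean]
  intro i
  fin_cases i
  · exact (smooth_diff (contDiff_pd hp 0)).neg ξ
  · exact (smooth_diff (contDiff_pd hp 1)).neg ξ

theorem det_fderiv_negGrad {p : E2 → ℝ} (hp : ContDiff ℝ ∞ p) (ξ : E2) :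
    (fderiv ℝ (negGrad p) ξ).det = hessDet p ξ := by
  have hd := (differentiable_negGrad hp ξ).hasFDerivAt
  have hco : ∀ i j, (fderiv ℝ (negGrad p) ξ (bvec j)) i = -pd j (pd i p) ξ := by
    intro i j
    have h1 : HasFDerivAt (fun η => negGrad p η i)
        ((EuclideanSpace.proj i : E2 →L[ℝ] ℝ) ∘L fderiv ℝ (negGrad p) ξ) ξ :=
      (EuclideanSpace.proj i : E2 →L[ℝ] ℝ).hasFDerivAt.comp ξ hd
    have h2 : (fun η => negGrad p η i) = fun η => -pd i p η := by
      funext η; fin_cases i <;> simp [negGrad]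
    rw [h2] at h1
    have h3 := h1.unique (smooth_diff (contDiff_pd hp i) ξ).hasFDerivAt.neg
    have h4 := congrArg (fun A : E2 →L[ℝ] ℝ => A (bvec j)) h3
    simpa [pd] using h4
  have hb : ∀ j, (EuclideanSpace.basisFun (Fin 2) ℝ).toBasis j = bvec j := by
    intro j; simp [bvec]
  rw [ContinuousLinearMap.det, ← LinearMap.det_toMatrix (EuclideanSpace.basisFun (Fin 2) ℝ).toBasis,
    Matrix.det_fin_two]
  simp only [LinearMap.toMatrix_apply, hb, ContinuousLinearMap.coe_coe,
    OrthonormalBasis.coe_toBasis_repr_apply, EuclideanSpace.basisFun_repr, hco]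
  rw [hessDet, pd_comm hp 1 0]
  ring

/-- The strongly convex regularisation of `q`. -/
noncomputable def regular (ε : ℝ) (q : E2 → ℝ) : E2 → ℝ := fun ξ => q ξ + ε * (1 / 2 * ‖ξ‖ ^ 2)

theorem contDiff_regular {q : E2 → ℝ} (hq : ContDiff ℝ ∞ q) (ε : ℝ) :
    ContDiff ℝ ∞ (regular ε q) := hq.add (contDiff_const.mul contDiff_half_sq)

theorem convexOn_regular {q : E2 → ℝ} (hc : ConvexOn ℝ univ q) {ε : ℝ} (hε : 0 ≤ ε) :
    ConvexOn ℝ univ (regular ε q) := by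
  have h1 : ConvexOn ℝ univ (fun ξ : E2 => ‖ξ‖ ^ 2) :=
    (convexOn_norm convex_univ).pow (fun _ _ => norm_nonneg _) 2
  have h2 := h1.smul (c := ε * (1 / 2)) (by positivity)
  refine (hc.add h2).congr fun ξ _ => ?_
  simp [regular]; ring

theorem fderiv_regular {q : E2 → ℝ} (hq : ContDiff ℝ ∞ q) (ε : ℝ) (ξ v : E2) :
    fderiv ℝ (regular ε q) ξ v = fderiv ℝ q ξ v + ε * inner ℝ ξ v := by
  have d1 := (smooth_diff hq ξ)
  have h2 : HasFDerivAt (fun ξ : E2 => ‖ξ‖ ^ 2) (2 • innerSL ℝ ξ) ξ :=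
    (hasStrictFDerivAt_norm_sq ξ).hasFDerivAt
  have h3 := (d1.hasFDerivAt.add ((h2.const_mul (1 / 2)).const_mul ε)).fderiv
  change fderiv ℝ (q + fun y => ε * (1 / 2 * ‖y‖ ^ 2)) ξ v = _
  rw [h3]
  simp

theorem regular_strong_mono {q : E2 → ℝ} (hq : ContDiff ℝ ∞ q) (hc : ConvexOn ℝ univ q) (ε : ℝ)
    (ξ η : E2) :
    ε * ‖ξ - η‖ ^ 2 ≤ inner ℝ (ξ - η) (negGrad (regular ε q) η - negGrad (regular ε q) ξ) := by
  have e1 := hc.add_fderiv_le (mem_univ ξ) (mem_univ η) (smooth_diff hq ξ).hasFDerivAt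
  have e2 := hc.add_fderiv_le (mem_univ η) (mem_univ ξ) (smooth_diff hq η).hasFDerivAt
  rw [inner_sub_right, inner_negGrad, inner_negGrad, fderiv_regular hq, fderiv_regular hq,
    ← real_inner_self_eq_norm_sq]
  have e3 : fderiv ℝ q ξ (η - ξ) = - fderiv ℝ q ξ (ξ - η) := by rw [← map_neg, neg_sub]
  have e4 : inner ℝ (ξ - η) (ξ - η) = inner ℝ ξ (ξ - η) - inner ℝ η (ξ - η) := inner_sub_left _ _ _
  rw [e3] at e1
  rw [e4]
  linarith

theorem exists_inverse_negGrad {q : E2 → ℝ} (hq : ContDiff ℝ ∞ q) (hc : ConvexOn ℝ univ q) {C : ℝ}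
    (hC : ∀ ξ, -C ≤ q ξ) {ε : ℝ} (hε : 0 < ε) :
    ∃ T : E2 → E2, Continuous T ∧ (∀ x, negGrad (regular ε q) (T x) = x) ∧
      (∀ ξ, T (negGrad (regular ε q) ξ) = ξ) ∧
      ∀ x ξ, regular ε q (T x) + inner ℝ (T x) x ≤ regular ε q ξ + inner ℝ ξ x := by
  have hp := contDiff_regular hq ε
  have hex : ∀ x : E2, ∃ ξ, ∀ η, regular ε q ξ + inner ℝ ξ x ≤ regular ε q η + inner ℝ η x := by
    intro x
    refine Continuous.exists_forall_le (hp.continuous.add (by fun_prop)) ?_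
    have ht : Tendsto (fun ξ : E2 => ‖ξ‖ * (ε * (1 / 2) * ‖ξ‖ - ‖x‖) + (-C)) (cocompact E2) atTop := by
      refine tendsto_atTop_add_const_right _ _ ?_
      have hn := tendsto_norm_cocompact_atTop (E := E2)
      exact hn.atTop_mul_atTop₀ (tendsto_atTop_add_const_right _ _
        (hn.const_mul_atTop (by positivity)))
    refine tendsto_atTop_mono (fun ξ => ?_) ht
    have h1 := hC ξ
    have h2 := abs_le.1 (abs_real_inner_le_norm ξ x)
    simp only [regular]
    nlinarith
  choose T hT using hex
  have hinv : ∀ x, negGrad (regular ε q) (T x) = x := by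
    intro x
    have hmin : IsLocalMin (fun ξ => regular ε q ξ + inner ℝ ξ x) (T x) :=
      Eventually.of_forall fun η => hT x η
    have h0 := hmin.fderiv_eq_zero
    have hdi : HasFDerivAt (fun ξ : E2 => inner ℝ ξ x) (innerSL ℝ x) (T x) := by
      have := (innerSL ℝ x).hasFDerivAt (x := T x)
      refine this.congr_of_eventuallyEq (Eventually.of_forall fun ξ => ?_)
      simp [real_inner_comm]
    have h1 := ((smooth_diff hp (T x)).hasFDerivAt.add hdi).fderiv
    refine ext_inner_left ℝ fun v => ?_
    have h2 := congrArg (fun A : E2 →L[ℝ] ℝ => A v) (h1.symm.trans h0)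
    simp at h2
    rw [inner_negGrad, real_inner_comm]
    linarith
  have hinj : ∀ ξ η, negGrad (regular ε q) ξ = negGrad (regular ε q) η → ξ = η := by
    intro ξ η h
    have := regular_strong_mono hq hc ε ξ η
    rw [h, sub_self, inner_zero_right] at this
    have h3 : ‖ξ - η‖ ^ 2 ≤ 0 := by
      by_contra hh
      push Not at hh
      nlinarith
    have : ‖ξ - η‖ = 0 := by nlinarith [norm_nonneg (ξ - η)]
    exact sub_eq_zero.1 (norm_eq_zero.1 this)
  refine ⟨T, ?_, hinv, fun ξ => hinj _ _ (hinv _), hT⟩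
  have hl : LipschitzWith (Real.toNNReal (1 / ε)) T := by
    refine LipschitzWith.of_dist_le_mul fun x y => ?_
    rw [Real.coe_toNNReal _ (by positivity), dist_eq_norm, dist_eq_norm]
    have h := regular_strong_mono hq hc ε (T x) (T y)
    rw [hinv, hinv] at h
    have h2 := h.trans (real_inner_le_norm _ _)
    rw [norm_sub_rev y x] at h2
    rcases (norm_nonneg (T x - T y)).eq_or_lt with h0 | h0
    · rw [← h0]; positivity
    · rw [div_mul_eq_mul_div, one_mul, le_div_iff₀ hε]
      nlinarith
  exact hl.continuous

theorem setIntegral_image_negGrad {q : E2 → ℝ} (hq : ContDiff ℝ ∞ q) (hc : ConvexOn ℝ univ q)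
    {ε : ℝ} (hε : 0 < ε) {T : E2 → E2} (hT : ∀ ξ, T (negGrad (regular ε q) ξ) = ξ) {S : Set E2}
    (hS : MeasurableSet S) :
    ∫ x in negGrad (regular ε q) '' S, newtonF (T x)
      = ∫ ξ in S, newtonF ξ * hessDet (regular ε q) ξ := by
  have hp := contDiff_regular hq ε
  rw [integral_image_eq_integral_abs_det_fderiv_smul volume hS
    (fun ξ _ => (differentiable_negGrad hp ξ).hasFDerivAt.hasFDerivWithinAt)
    (Function.LeftInverse.injective hT).injOn]
  refine integral_congr_ae (ae_of_all _ fun ξ => ?_)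
  simp only
  rw [hT, det_fderiv_negGrad hp, abs_of_nonneg (hessDet_nonneg hp (convexOn_regular hc hε.le) ξ),
    smul_eq_mul, mul_comm]

/-- The dual formula for the difference of the resistances of two smooth bodies. -/
theorem setIntegral_newtonF_sub {q₁ q₂ : E2 → ℝ} (h₁ : ContDiff ℝ ∞ q₁) (h₂ : ContDiff ℝ ∞ q₂)
    (c₁ : ConvexOn ℝ univ q₁) (c₂ : ConvexOn ℝ univ q₂) {ε : ℝ} (hε : 0 < ε) {T₁ T₂ : E2 → E2}
    (k₁ : Continuous T₁) (k₂ : Continuous T₂)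
    (r₁ : ∀ x, negGrad (regular ε q₁) (T₁ x) = x) (r₂ : ∀ x, negGrad (regular ε q₂) (T₂ x) = x)
    (l₁ : ∀ ξ, T₁ (negGrad (regular ε q₁) ξ) = ξ) (l₂ : ∀ ξ, T₂ (negGrad (regular ε q₂) ξ) = ξ)
    {c : E2} {r : ℝ} (heq : ∀ ξ, ξ ∉ closedBall c r → q₁ ξ = q₂ ξ)
    (hsub : ∀ ξ ∈ closedBall c r, ‖negGrad (regular ε q₂) ξ‖ < 1) :
    ∫ x in Omega, (newtonF (T₁ x) - newtonF (T₂ x))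
      = 1 / 2 * ∫ ξ, (q₁ ξ - q₂ ξ) * mixedHess newtonF (fun η => regular ε q₁ η + regular ε q₂ η) ξ := by
  set p₁ := regular ε q₁ with hp₁
  set p₂ := regular ε q₂ with hp₂
  have s₁ : ContDiff ℝ ∞ p₁ := contDiff_regular h₁ ε
  have s₂ : ContDiff ℝ ∞ p₂ := contDiff_regular h₂ ε
  set S := closedBall c r with hS
  have hpd : ∀ ξ, ξ ∉ S → p₁ =ᶠ[𝓝 ξ] p₂ := by
    intro ξ hξ
    filter_upwards [isClosed_closedBall.isOpen_compl.mem_nhds hξ] with η hη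
    simp only [hp₁, hp₂, regular, heq η hη]
  have hgrad : ∀ ξ, ξ ∉ S → negGrad p₁ ξ = negGrad p₂ ξ := by
    intro ξ hξ
    simp only [negGrad, pd, (hpd ξ hξ).fderiv_eq]
  have himg : negGrad p₁ '' S = negGrad p₂ '' S := by
    ext x
    constructor
    · rintro ⟨ξ, hξ, rfl⟩
      by_contra hn
      have hm : T₂ (negGrad p₁ ξ) ∉ S := fun hm => hn ⟨_, hm, r₂ _⟩
      have e := hgrad _ hm
      rw [r₂] at e
      have e' := congrArg T₁ e
      rw [l₁, l₁] at e'
      rw [e'] at hm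
      exact hm hξ
    · rintro ⟨ξ, hξ, rfl⟩
      by_contra hn
      have hm : T₁ (negGrad p₂ ξ) ∉ S := fun hm => hn ⟨_, hm, r₁ _⟩
      have e := hgrad _ hm
      rw [r₁] at e
      have e' := congrArg T₂ e
      rw [l₂, l₂] at e'
      rw [← e'] at hm
      exact hm hξ
  set X := negGrad p₂ '' S with hX
  have hXm : MeasurableSet X :=
    ((isCompact_closedBall c r).image (differentiable_negGrad s₂).continuous).measurableSet
  have hXΩ : X ⊆ Omega := by
    rintro _ ⟨ξ, hξ, rfl⟩
    simpa [Omega] using hsub ξ hξ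
  have hfin : volume Omega < ⊤ := measure_ball_lt_top
  have h_int : ∀ T : E2 → E2, Continuous T → IntegrableOn (fun x => newtonF (T x)) Omega := by
    intro T hT
    refine Measure.integrableOn_of_bounded (M := 1) hfin.ne
      (contDiff_newtonF.continuous.comp hT).aestronglyMeasurable (ae_of_all _ fun x => ?_)
    rw [Real.norm_of_nonneg (newtonF_nonneg _)]
    exact newtonF_le_one _
  have e1 : ∫ x in Omega, (newtonF (T₁ x) - newtonF (T₂ x))
      = ∫ x in X, (newtonF (T₁ x) - newtonF (T₂ x)) := by
    refine setIntegral_eq_of_subset_of_forall_sdiff_eq_zero measurableSet_ball hXΩ ?_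
    rintro x ⟨-, hx⟩
    have hm : T₂ x ∉ S := fun hm => hx ⟨_, hm, r₂ x⟩
    have e := hgrad _ hm
    rw [r₂] at e
    have : T₁ x = T₂ x := by rw [← l₁ (T₂ x), e]
    rw [this, sub_self]
  have hloc : ∀ p : E2 → ℝ, ContDiff ℝ ∞ p → IntegrableOn (fun ξ => newtonF ξ * hessDet p ξ) S := by
    intro p hp
    have h := fun i j => (contDiff_pd (contDiff_pd hp i) j).continuous
    refine Continuous.continuousOn ?_ |>.integrableOn_compact (isCompact_closedBall c r)
    exact contDiff_newtonF.continuous.mul (((h 0 0).mul (h 1 1)).sub ((h 1 0).pow 2))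
  rw [e1, integral_sub ((h_int T₁ k₁).mono_set hXΩ) ((h_int T₂ k₂).mono_set hXΩ)]
  nth_rewrite 1 [← himg]
  rw [hX, hp₁, hp₂, setIntegral_image_negGrad h₁ c₁ hε l₁ measurableSet_closedBall,
    setIntegral_image_negGrad h₂ c₂ hε l₂ measurableSet_closedBall, ← hp₁, ← hp₂,
    ← integral_sub (hloc p₁ s₁) (hloc p₂ s₂)]
  set θ : E2 → ℝ := fun ξ => q₁ ξ - q₂ ξ with hθ
  have sθ : ContDiff ℝ ∞ θ := h₁.sub h₂
  have cθ : HasCompactSupport θ := HasCompactSupport.intro (isCompact_closedBall c r) fun ξ hξ => by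
    simp [hθ, heq ξ hξ]
  have hpθ : (fun ξ => p₁ ξ - p₂ ξ) = θ := by
    funext ξ; simp only [hp₁, hp₂, regular, hθ]; ring
  have e2 : ∀ ξ, newtonF ξ * hessDet p₁ ξ - newtonF ξ * hessDet p₂ ξ
      = 1 / 2 * (newtonF ξ * mixedHess θ (fun η => p₁ η + p₂ η) ξ) := by
    intro ξ
    rw [← mul_sub, hessDet_sub s₁ s₂, hpθ]
    ring
  simp_rw [e2]
  rw [integral_const_mul, setIntegral_eq_integral_of_forall_compl_eq_zero,
    integral_mixedHess_symm sθ contDiff_newtonF (s₁.add s₂) cθ]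
  intro ξ hξ
  have hts : tsupport θ ⊆ S := closure_minimal (fun η hη => by
    by_contra hn
    exact hη (by simp [hθ, heq η hn])) isClosed_closedBall
  rw [mixedHess_comm, mixedHess_eq_zero_of_notMem (fun h => hξ (hts h)), mul_zero]

/-- Existence of a mollification operator at scale `δ`. -/
theorem exists_mollifier {δ : ℝ} (hδ : 0 < δ) :
    ∃ L : (E2 → ℝ) → E2 → ℝ,
      (∀ f, Continuous f → ContDiff ℝ ∞ (L f)) ∧
      (∀ f g, Continuous f → Continuous g → ∀ ξ, L f ξ - L g ξ = L (fun η => f η - g η) ξ) ∧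
      (∀ f, Continuous f → ConvexOn ℝ univ f → ConvexOn ℝ univ (L f)) ∧
      (∀ f, Continuous f → ∀ ξ a b, (∀ η ∈ ball ξ δ, |f η - a| ≤ b) → |L f ξ - a| ≤ b) ∧
      (∀ f ξ h, L f (ξ + h) = L (fun η => f (η + h)) ξ) ∧
      (∀ f, (∀ ξ, 0 ≤ f ξ) → ∀ ξ, 0 ≤ L f ξ) := by
  let φ : ContDiffBump (0 : E2) := ⟨δ / 2, δ, by positivity, by linarith⟩
  have cφ : Continuous (φ.normed volume) := φ.continuous_normed
  have sφ : HasCompactSupport (φ.normed volume) := φ.hasCompactSupport_normed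
  have h_int : ∀ f : E2 → ℝ, Continuous f → ∀ ξ,
      Integrable (fun t => φ.normed volume t * f (ξ - t)) := fun f hf ξ =>
    (cφ.mul (hf.comp (by fun_prop))).integrable_of_hasCompactSupport sφ.mul_right
  have hconv : ∀ f : E2 → ℝ, (fun ξ => ∫ t, φ.normed volume t * f (ξ - t))
      = convolution (φ.normed volume) f (ContinuousLinearMap.lsmul ℝ ℝ) volume := by
    intro f; funext ξ; simp [convolution]
  refine ⟨fun f ξ => ∫ t, φ.normed volume t * f (ξ - t), ?_, ?_, ?_, ?_, ?_, ?_⟩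
  · intro f hf
    beta_reduce
    rw [hconv]
    exact sφ.contDiff_convolution_left _ φ.contDiff_normed hf.locallyIntegrable
  · intro f g hf hg ξ
    simp only
    rw [← integral_sub (h_int f hf ξ) (h_int g hg ξ)]
    simp only [mul_sub]
  · intro f hf hc
    refine ⟨convex_univ, fun ξ _ η _ a b ha hb hab => ?_⟩
    simp only [smul_eq_mul]
    rw [← integral_const_mul, ← integral_const_mul,
      ← integral_add ((h_int f hf ξ).const_mul a) ((h_int f hf η).const_mul b)]
    refine integral_mono (h_int f hf _)
      (((h_int f hf ξ).const_mul a).add ((h_int f hf η).const_mul b)) fun t => ?_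
    have e : a • ξ + b • η - t = a • (ξ - t) + b • (η - t) := by
      have : t = (a + b) • t := by rw [hab, one_smul]
      nth_rewrite 1 [this]
      module
    have h := hc.2 (mem_univ (ξ - t)) (mem_univ (η - t)) ha hb hab
    rw [← e, smul_eq_mul, smul_eq_mul] at h
    have := mul_le_mul_of_nonneg_left h (φ.nonneg_normed (μ := volume) t)
    simp only
    linarith
  · intro f hf ξ a b h
    have e := congrFun (hconv f) ξ
    simp only at e ⊢
    rw [e, ← Real.dist_eq]
    refine dist_convolution_le (R := δ) ?_ φ.support_normed_eq.subset φ.nonneg_normed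
      φ.integral_normed hf.aestronglyMeasurable h
    exact (abs_nonneg _).trans (h ξ (mem_ball_self hδ))
  · intro f ξ h
    simp only
    congr 1
    funext t
    rw [show ξ + h - t = ξ - t + h by abel]
  · intro f hf ξ
    exact integral_nonneg fun t => mul_nonneg (φ.nonneg_normed t) (hf _)

theorem norm_negGrad_le {p : E2 → ℝ} (hp : Differentiable ℝ p) {ξ : E2} {ρ : ℝ} (hρ : 0 ≤ ρ)
    (h : ∀ᶠ η in 𝓝 ξ, |p η - p ξ| ≤ ρ * ‖η - ξ‖) : ‖negGrad p ξ‖ ≤ ρ := by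
  have h1 : ‖fderiv ℝ p ξ‖ ≤ ρ := (hp ξ).hasFDerivAt.le_of_lip' hρ (by simpa using h)
  have h2 := inner_negGrad p ξ (negGrad p ξ)
  rw [real_inner_self_eq_norm_sq] at h2
  have h3 := (fderiv ℝ p ξ).le_opNorm (negGrad p ξ)
  rw [Real.norm_eq_abs] at h3
  have h4 := neg_abs_le (fderiv ℝ p ξ (negGrad p ξ))
  by_contra hn
  push Not at hn
  have : 0 < ‖negGrad p ξ‖ := hρ.trans_lt hn
  nlinarith [mul_le_mul_of_nonneg_right h1 this.le]

theorem negGrad_regular {q : E2 → ℝ} (hq : ContDiff ℝ ∞ q) (ε : ℝ) (ξ : E2) :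
    negGrad (regular ε q) ξ = negGrad q ξ - ε • ξ := by
  refine ext_inner_left ℝ fun v => ?_
  rw [inner_negGrad, fderiv_regular hq, inner_sub_right, inner_negGrad, inner_smul_right,
    real_inner_comm]
  ring

/-- Near-optimal dual variables converge to the gradient at points of differentiability. -/
theorem tendsto_gradient_of_near_min {v G : E2 → ℝ} {x : E2} (hx : x ∈ Omega)
    (hd : DifferentiableAt ℝ v x) (hle : ∀ y ∈ Omega, ∀ ξ, v y ≤ G ξ + inner ℝ ξ y)
    {t : ℕ → E2} (ht : ∀ ε > 0, ∀ᶠ n in atTop, G (t n) + inner ℝ (t n) x ≤ v x + ε) :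
    Tendsto t atTop (𝓝 (gradient v x)) := by
  rw [Metric.tendsto_atTop']
  suffices h : ∀ ε > 0, ∀ᶠ n in atTop, ‖t n - gradient v x‖ ≤ ε by
    intro ε hε
    obtain ⟨N, hN⟩ := eventually_atTop.1 (h (ε / 2) (by positivity))
    exact ⟨N, fun n hn => by rw [dist_eq_norm]; linarith [hN n hn.le]⟩
  intro ε hε
  have hg : ∀ h : E2, fderiv ℝ v x h = inner ℝ (gradient v x) h := by
    intro h
    simp [gradient]
  have ho := hd.hasFDerivAt.isLittleO.def (c := ε / 2) (by positivity)
  have hΩ : Omega ∈ 𝓝 x := isOpen_ball.mem_nhds hx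
  obtain ⟨d, hd0, hdb⟩ := Metric.eventually_nhds_iff.1 (ho.and hΩ)
  filter_upwards [ht (ε / 2 * (d / 2)) (by positivity)] with n hn
  by_contra hcon
  push Not at hcon
  set w := t n - gradient v x with hw
  have hw0 : 0 < ‖w‖ := hε.trans hcon
  set k : ℝ := d / 2 / ‖w‖ with hk
  have hk0 : 0 < k := by positivity
  have hkw : k * ‖w‖ = d / 2 := by rw [hk]; field_simp
  set y := x - k • w with hy
  have hyx : y - x = -(k • w) := by rw [hy]; abel
  have hnorm : ‖y - x‖ = d / 2 := by rw [hyx, norm_neg, norm_smul, Real.norm_of_nonneg hk0.le, hkw]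
  obtain ⟨h1, h2⟩ := @hdb y (by rw [dist_eq_norm, hnorm]; linarith)
  rw [Real.norm_eq_abs, hnorm, hg] at h1
  have h3 := hle y h2 (t n)
  have h4 : inner ℝ (t n) y = inner ℝ (t n) x + inner ℝ (t n) (y - x) := by
    rw [← inner_add_right]; congr 1; abel
  have h5 : inner ℝ (t n) (y - x) = inner ℝ w (y - x) + inner ℝ (gradient v x) (y - x) := by
    rw [← inner_add_left]; congr 1; rw [hw]; abel
  have h6 : inner ℝ w (y - x) = -(k * ‖w‖ ^ 2) := by
    rw [hyx, inner_neg_right, inner_smul_right, real_inner_self_eq_norm_sq]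
  have h7 := (abs_le.1 h1).1
  have h8 : k * ‖w‖ ^ 2 = d / 2 * ‖w‖ := by rw [← hkw]; ring
  nlinarith

theorem ConcaveOn.ae_differentiableAt_Omega {v : E2 → ℝ} (hv : ConcaveOn ℝ Omega v) :
    ∀ᵐ x ∂(volume.restrict Omega), DifferentiableAt ℝ v x := by
  have hopen : IsOpen Omega := isOpen_ball
  have hl : LocallyLipschitzOn Omega v := hv.locallyLipschitzOn hopen
  have hcov : Omega = ⋃ n : ℕ, ball (0 : E2) (1 - 1 / (n + 1)) := by
    ext x
    simp only [Omega, mem_ball_zero_iff, mem_iUnion]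
    constructor
    · intro h
      obtain ⟨n, hn⟩ := exists_nat_one_div_lt (sub_pos.2 h)
      exact ⟨n, by linarith⟩
    · rintro ⟨n, hn⟩
      have : (0 : ℝ) < 1 / (n + 1) := by positivity
      linarith
  rw [hcov, ae_restrict_iUnion_iff]
  intro n
  have hsub : closedBall (0 : E2) (1 - 1 / (n + 1)) ⊆ Omega :=
    closedBall_subset_ball (by have : (0 : ℝ) < 1 / (n + 1) := by positivity
                               linarith)
  obtain ⟨C, hC⟩ := (hl.mono hsub).exists_lipschitzOnWith_of_compact (isCompact_closedBall _ _)
  have := (hC.mono ball_subset_closedBall).ae_differentiableWithinAt (μ := volume)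
    measurableSet_ball
  filter_upwards [this, ae_restrict_mem measurableSet_ball] with x hx hxm
  exact hx.differentiableAt (isOpen_ball.mem_nhds hxm)

theorem integrableOn_newtonF_comp {T : E2 → E2} (hT : Continuous T) :
    IntegrableOn (fun x => newtonF (T x)) Omega := by
  refine Measure.integrableOn_of_bounded (M := 1) measure_ball_lt_top.ne
    (contDiff_newtonF.continuous.comp hT).aestronglyMeasurable (ae_of_all _ fun x => ?_)
  rw [Real.norm_of_nonneg (newtonF_nonneg _)]
  exact newtonF_le_one _

/-- Convergence of the resistances of regularised bodies. -/
theorem tendsto_resistance {v G : E2 → ℝ} (hv : ConcaveOn ℝ Omega v)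
    (hle : ∀ y ∈ Omega, ∀ ξ, v y ≤ G ξ + inner ℝ ξ y)
    (hinf : ∀ x ∈ Omega, DifferentiableAt ℝ v x → ∀ ε > 0, ∃ ξ, G ξ + inner ℝ ξ x < v x + ε)
    {q : ℕ → E2 → ℝ} (hq : ∀ ε > 0, ∀ᶠ n in atTop, ∀ ξ, |q n ξ - G ξ| ≤ ε) {e : ℕ → ℝ}
    (he : ∀ n, 0 < e n) (he0 : Tendsto e atTop (𝓝 0)) {T : ℕ → E2 → E2}
    (hT : ∀ n, Continuous (T n))
    (hmin : ∀ n x ξ, regular (e n) (q n) (T n x) + inner ℝ (T n x) x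
      ≤ regular (e n) (q n) ξ + inner ℝ ξ x) :
    Tendsto (fun n => ∫ x in Omega, newtonF (T n x)) atTop (𝓝 (J v)) := by
  refine tendsto_integral_of_dominated_convergence (fun _ => 1)
    (fun n => (contDiff_newtonF.continuous.comp (hT n)).aestronglyMeasurable)
    (integrableOn_const measure_ball_lt_top.ne) (fun n => ae_of_all _ fun x => ?_) ?_
  · rw [Real.norm_of_nonneg (newtonF_nonneg _)]
    exact newtonF_le_one _
  filter_upwards [hv.ae_differentiableAt_Omega, ae_restrict_mem (μ := volume)
    (s := Omega) measurableSet_ball] with x hd hx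
  have hF : Tendsto newtonF (𝓝 (gradient v x)) (𝓝 (1 / (‖gradient v x‖ ^ 2 + 1))) :=
    contDiff_newtonF.continuous.tendsto _
  refine hF.comp (tendsto_gradient_of_near_min hx hd hle fun ε hε => ?_)
  obtain ⟨ξ, hξ⟩ := hinf x hx hd (ε / 4) (by positivity)
  have h1 : Tendsto (fun n => e n * (1 / 2 * ‖ξ‖ ^ 2)) atTop (𝓝 0) := by
    simpa using he0.mul_const (1 / 2 * ‖ξ‖ ^ 2)
  filter_upwards [hq (ε / 4) (by positivity), h1.eventually_lt_const (u := ε / 4) (by positivity)]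
    with n hn hn2
  have h2 := hmin n x ξ
  have h3 := (abs_le.1 (hn (T n x))).1
  have h4 := (abs_le.1 (hn ξ)).2
  have h5 : 0 ≤ e n * (1 / 2 * ‖T n x‖ ^ 2) := by have := he n; positivity
  simp only [regular] at h2
  linarith

/-- The properties of the support function `g` of the body below a minimizer `u`, near a
neighbourhood of normals of an exposed part of the graph. -/
structure DualSetup (M : ℝ) (u g : E2 → ℝ) (c : E2) (R ρ m : ℝ) : Prop where
  concave_u : ConcaveOn ℝ Omega u
  u_nonneg : ∀ x ∈ Omega, 0 ≤ u x
  isMin : ∀ v : E2 → ℝ, ConcaveOn ℝ Omega v → (∀ x ∈ Omega, v x ∈ Icc 0 M) → J u ≤ J v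
  convex_g : ConvexOn ℝ univ g
  lip : ∀ ξ η, |g ξ - g η| ≤ ‖ξ - η‖
  g_nonneg : ∀ ξ, 0 ≤ g ξ
  g_zero_le : g 0 ≤ M
  dual_le : ∀ x ∈ Omega, ∀ ξ, u x ≤ g ξ + inner ℝ ξ x
  dual_eq : ∀ x ∈ Omega, DifferentiableAt ℝ u x →
    g (gradient u x) + inner ℝ (gradient u x) x ≤ u x
  R_pos : 0 < R
  ρ_nonneg : 0 ≤ ρ
  ρ_lt : ρ < 1
  m_pos : 0 < m
  ball_lip : ∀ ξ ∈ closedBall c R, ∀ η ∈ closedBall c R, |g ξ - g η| ≤ ρ * ‖ξ - η‖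
  ball_low : ∀ ξ ∈ closedBall c R, ∀ x ∈ Omega, m ≤ g ξ + inner ℝ ξ x
  zero_notMem : (0 : E2) ∉ closedBall c R
  exposed : ∀ ξ ∈ closedBall c R, ∃ q : E2, ∀ η, η ≠ ξ → g ξ + inner ℝ q (η - ξ) < g η
  subgrad : ∀ ξ, ∃ q : E2, ∀ η, g ξ + inner ℝ q (η - ξ) ≤ g η

theorem DualSetup.continuous_g {M : ℝ} {u g : E2 → ℝ} {c : E2} {R ρ m : ℝ}
    (h : DualSetup M u g c R ρ m) : Continuous g :=
  (LipschitzWith.of_dist_le_mul (K := 1) fun ξ η => by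
    simpa [dist_eq_norm, Real.norm_eq_abs] using h.lip ξ η).continuous

/-- An admissible competitor obtained by perturbing the support function. -/
theorem DualSetup.exists_competitor {M : ℝ} {u g : E2 → ℝ} {c : E2} {R ρ m : ℝ}
    (h : DualSetup M u g c R ρ m) {G : E2 → ℝ} (hGm : ∀ ξ, |G ξ - g ξ| ≤ m)
    (hGg : ∀ ξ, ξ ∉ closedBall c R → G ξ = g ξ) :
    ∃ v : E2 → ℝ, ConcaveOn ℝ Omega v ∧ J u ≤ J v ∧
      (∀ y ∈ Omega, ∀ ξ, v y ≤ G ξ + inner ℝ ξ y) ∧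
      (∀ x ∈ Omega, ∀ ε > 0, ∃ ξ, G ξ + inner ℝ ξ x < v x + ε) := by
  have hlow : ∀ x ∈ Omega, ∀ ξ, 0 ≤ G ξ + inner ℝ ξ x := by
    intro x hx ξ
    by_cases hξ : ξ ∈ closedBall c R
    · have h1 := h.ball_low ξ hξ x hx
      have h2 := (abs_le.1 (hGm ξ)).1
      linarith
    · rw [hGg ξ hξ]
      exact (h.u_nonneg x hx).trans (h.dual_le x hx ξ)
  have hbdd : ∀ x ∈ Omega, BddBelow (range fun ξ => G ξ + inner ℝ ξ x) := fun x hx =>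
    ⟨0, by rintro _ ⟨ξ, rfl⟩; exact hlow x hx ξ⟩
  set v : E2 → ℝ := fun x => ⨅ ξ, (G ξ + inner ℝ ξ x) with hv
  have hle : ∀ y ∈ Omega, ∀ ξ, v y ≤ G ξ + inner ℝ ξ y := fun y hy ξ => ciInf_le (hbdd y hy) ξ
  have hconc : ConcaveOn ℝ Omega v := by
    refine ⟨convex_ball _ _, fun x hx y hy a b ha hb hab => ?_⟩
    refine le_ciInf fun ξ => ?_
    have h1 := mul_le_mul_of_nonneg_left (hle x hx ξ) ha
    have h2 := mul_le_mul_of_nonneg_left (hle y hy ξ) hb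
    rw [inner_add_right, inner_smul_right, inner_smul_right, smul_eq_mul, smul_eq_mul]
    have h3 : G ξ = a * G ξ + b * G ξ := by rw [← add_mul, hab, one_mul]
    linarith
  refine ⟨v, hconc, h.isMin v hconc fun x hx => ⟨le_ciInf (hlow x hx), ?_⟩, hle, ?_⟩
  · have := hle x hx 0
    rw [hGg 0 h.zero_notMem, inner_zero_left, add_zero] at this
    exact this.trans h.g_zero_le
  · intro x hx ε hε
    exact exists_lt_of_ciInf_lt (lt_add_of_pos_right (v x) hε)

/-- The dual form of minimality, tested against smooth functions. -/
theorem DualSetup.dual_inequality {M : ℝ} {u g : E2 → ℝ} {c : E2} {R ρ m : ℝ}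
    (h : DualSetup M u g c R ρ m) {r : ℝ} (hr : 0 < r) (hrR : r < R) :
    ∃ C, 0 ≤ C ∧ ∀ (G χ : E2 → ℝ) (b : ℝ), ConvexOn ℝ univ G → (∀ ξ, |G ξ - g ξ| ≤ m) →
      (∀ ξ, ξ ∉ closedBall c r → G ξ = g ξ) → ContDiff ℝ ∞ χ →
      (∀ ξ, ξ ∉ closedBall c r → χ ξ = 0) → (∀ ξ, |G ξ - g ξ - χ ξ| ≤ b) →
      0 ≤ C * b + ∫ ξ, (G ξ + g ξ) * mixedHess newtonF χ ξ := by
  have hρ1 := h.ρ_lt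
  have hρ0 := h.ρ_nonneg
  have hm := h.m_pos
  have hgc := h.continuous_g
  set d : ℝ := min ((R - r) / 4) 1 with hd
  have hd0 : 0 < d := lt_min (by linarith) one_pos
  have hd1 : d ≤ 1 := min_le_right _ _
  have hdR : r + 4 * d ≤ R := by have : d ≤ (R - r) / 4 := min_le_left _ _
                                 linarith
  set N₀ : ℝ := ‖c‖ + (r + d) + 2 with hN₀
  have hN₀0 : 0 < N₀ := by positivity
  set e₀ : ℝ := (1 - ρ) / (2 * N₀) with he₀
  have he₀0 : 0 < e₀ := div_pos (by linarith) (by positivity)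
  have heN : e₀ * N₀ < 1 - ρ := by
    rw [he₀, div_mul_eq_mul_div, div_lt_iff₀ (by positivity)]
    have : 0 < 1 - ρ := by linarith
    nlinarith
  obtain ⟨C₀, hC₀, hC₀b⟩ := exists_setIntegral_abs_mixedHess_le contDiff_newtonF c (r + d)
  set B₀ : ℝ := 2 * (M + N₀) + 2 + m + e₀ * N₀ ^ 2 with hB₀
  have hM : 0 ≤ M := (h.g_nonneg 0).trans h.g_zero_le
  have hB₀0 : 0 ≤ B₀ := by positivity
  refine ⟨C₀ * B₀, by positivity, fun G χ b hGc hGm hGg hχ hχ0 hb => ?_⟩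
  have hGcont : Continuous G := continuousOn_univ.1 (hGc.continuousOn isOpen_univ)
  set θ : E2 → ℝ := fun ξ => G ξ - g ξ with hθ
  have hθc : Continuous θ := hGcont.sub hgc
  have hθ0 : ∀ ξ, ξ ∉ closedBall c r → θ ξ = 0 := fun ξ hξ => by simp [hθ, hGg ξ hξ]
  have hθs : HasCompactSupport θ := HasCompactSupport.intro (isCompact_closedBall c r) hθ0
  have hθu : UniformContinuous θ := hθs.uniformContinuous_of_continuous hθc
  have hrR' : closedBall c r ⊆ closedBall c R := closedBall_subset_closedBall hrR.le
  obtain ⟨v, hvc, hJ, hvle, hvinf⟩ := h.exists_competitor hGm fun ξ hξ => hGg ξ fun hh => hξ (hrR' hh)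
  set δ : ℕ → ℝ := fun n => d * (1 / ((n : ℝ) + 1)) with hδ
  set e : ℕ → ℝ := fun n => e₀ * (1 / ((n : ℝ) + 1)) with he
  have hn1 : ∀ n : ℕ, 0 < 1 / ((n : ℝ) + 1) ∧ 1 / ((n : ℝ) + 1) ≤ 1 := fun n =>
    ⟨by positivity, by rw [div_le_one (by positivity)]; linarith [n.cast_nonneg (α := ℝ)]⟩
  have hδ0 : ∀ n, 0 < δ n := fun n => mul_pos hd0 (hn1 n).1
  have hδd : ∀ n, δ n ≤ d := fun n => mul_le_of_le_one_right hd0.le (hn1 n).2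
  have he0 : ∀ n, 0 < e n := fun n => mul_pos he₀0 (hn1 n).1
  have hee : ∀ n, e n ≤ e₀ := fun n => mul_le_of_le_one_right he₀0.le (hn1 n).2
  have hδt : Tendsto δ atTop (𝓝 0) := by
    have := (tendsto_one_div_add_atTop_nhds_zero_nat (𝕜 := ℝ)).const_mul d
    rwa [mul_zero] at this
  have het : Tendsto e atTop (𝓝 0) := by
    have := (tendsto_one_div_add_atTop_nhds_zero_nat (𝕜 := ℝ)).const_mul e₀
    rwa [mul_zero] at this
  choose L Lsm Lsub Lcv Lcl Ltr Lnn using fun n => exists_mollifier (hδ0 n)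
  have hLθ : ∀ n ξ, L n G ξ - L n g ξ = L n θ ξ := fun n => Lsub n G g hGcont hgc
  have hLg : ∀ n ξ, |L n g ξ - g ξ| ≤ δ n := fun n ξ => Lcl n g hgc ξ _ _ fun η hη =>
    (h.lip η ξ).trans (by rw [← dist_eq_norm]; exact (mem_ball.1 hη).le)
  have hLθm : ∀ n ξ, |L n θ ξ| ≤ m := fun n ξ => by
    simpa using Lcl n θ hθc ξ 0 m fun η _ => by simpa using hGm η
  have hLθt : ∀ ε > 0, ∀ᶠ n in atTop, ∀ ξ, |L n θ ξ - θ ξ| ≤ ε := by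
    intro ε hε
    obtain ⟨s, hs, hsb⟩ := Metric.uniformContinuous_iff.1 hθu ε hε
    filter_upwards [hδt.eventually_lt_const hs] with n hn ξ
    refine Lcl n θ hθc ξ _ _ fun η hη => ?_
    have := hsb ((mem_ball.1 hη).trans hn)
    rw [Real.dist_eq] at this
    exact this.le
  have hLgt : ∀ ε > 0, ∀ᶠ n in atTop, ∀ ξ, |L n g ξ - g ξ| ≤ ε := by
    intro ε hε
    filter_upwards [hδt.eventually_lt_const hε] with n hn ξ
    exact (hLg n ξ).trans hn.le
  have hLGt : ∀ ε > 0, ∀ᶠ n in atTop, ∀ ξ, |L n G ξ - G ξ| ≤ ε := by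
    intro ε hε
    filter_upwards [hLgt (ε / 2) (by positivity), hLθt (ε / 2) (by positivity)] with n h1 h2 ξ
    have e1 : L n G ξ - G ξ = (L n g ξ - g ξ) + (L n θ ξ - θ ξ) := by
      rw [← hLθ]; simp only [hθ]; ring
    rw [e1]
    exact (abs_add_le _ _).trans (by linarith [h1 ξ, h2 ξ])
  have hg1 : ∀ n ξ, |L n g ξ - g ξ| ≤ 1 := fun n ξ => (hLg n ξ).trans ((hδd n).trans hd1)
  have hlow2 : ∀ n ξ, -(m + 1) ≤ L n g ξ := fun n ξ => by
    have := (abs_le.1 (hg1 n ξ)).1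
    linarith [h.g_nonneg ξ]
  have hlow1 : ∀ n ξ, -(m + 1) ≤ L n G ξ := fun n ξ => by
    have := (abs_le.1 (hg1 n ξ)).1
    have h2 := (abs_le.1 (hLθm n ξ)).1
    linarith [h.g_nonneg ξ, hLθ n ξ]
  have sG := fun n => Lsm n G hGcont
  have sg := fun n => Lsm n g hgc
  have vG := fun n => Lcv n G hGcont hGc
  have vg := fun n => Lcv n g hgc h.convex_g
  choose T₁ k₁ r₁ l₁ m₁ using fun n => exists_inverse_negGrad (sG n) (vG n) (hlow1 n) (he0 n)
  choose T₂ k₂ r₂ l₂ m₂ using fun n => exists_inverse_negGrad (sg n) (vg n) (hlow2 n) (he0 n)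
  have t₁ := tendsto_resistance hvc hvle (fun x hx _ => hvinf x hx) hLGt he0 het k₁ m₁
  have t₂ := tendsto_resistance h.concave_u h.dual_le
    (fun x hx hdx ε hε => ⟨_, by have := h.dual_eq x hx hdx; linarith⟩) hLgt he0 het k₂ m₂
  have hLeq : ∀ n ξ, ξ ∉ closedBall c (r + d) → L n θ ξ = 0 := by
    intro n ξ hξ
    have := Lcl n θ hθc ξ 0 0 fun η hη => by
      rw [hθ0 η, sub_zero, abs_zero]
      intro hη2
      apply hξ
      rw [mem_closedBall] at hη2 ⊢
      have h1 := dist_triangle ξ η c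
      rw [dist_comm ξ η] at h1
      linarith [mem_ball.1 hη, hδd n]
    rw [sub_zero] at this
    exact abs_nonpos_iff.1 this
  have heq : ∀ n ξ, ξ ∉ closedBall c (r + d) → L n G ξ = L n g ξ := fun n ξ hξ => by
    have := hLeq n ξ hξ
    rw [← hLθ] at this
    linarith
  have hnorm : ∀ ξ ∈ closedBall c (r + d + 2), ‖ξ‖ ≤ N₀ := by
    intro ξ hξ
    have h1 : ‖ξ - c‖ ≤ r + d + 2 := by rwa [← dist_eq_norm]
    have h2 : ‖ξ‖ ≤ ‖ξ - c‖ + ‖c‖ := by simpa using norm_add_le (ξ - c) c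
    rw [hN₀]; linarith
  have hgradlt : ∀ n, ∀ ξ ∈ closedBall c (r + d), ‖negGrad (regular (e n) (L n g)) ξ‖ < 1 := by
    intro n ξ hξ
    have h1 : ‖negGrad (L n g) ξ‖ ≤ ρ := by
      refine norm_negGrad_le (smooth_diff (sg n)) hρ0 ?_
      filter_upwards [ball_mem_nhds ξ hd0] with η hη
      set k := η - ξ with hk
      have hkd : ‖k‖ < d := by rw [hk, ← dist_eq_norm]; exact hη
      have e1 : η = ξ + k := by rw [hk]; abel
      have hgk : Continuous fun ζ => g (ζ + k) := hgc.comp (continuous_id.add continuous_const)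
      rw [e1, Ltr n g ξ k, Lsub n (fun ζ => g (ζ + k)) g hgk hgc]
      have := Lcl n (fun ζ => g (ζ + k) - g ζ) (hgk.sub hgc) ξ 0 (ρ * ‖k‖)
        fun ζ hζ => by
          have hd1 : dist ζ c ≤ r + 2 * d := by
            linarith [dist_triangle ζ ξ c, mem_closedBall.1 hξ, mem_ball.1 hζ, hδd n]
          have hd2 : dist (ζ + k) c ≤ r + 3 * d := by
            have : dist (ζ + k) ζ = ‖k‖ := by simp [dist_eq_norm]
            linarith [dist_triangle (ζ + k) ζ c]
          have := h.ball_lip (ζ + k) (by rw [mem_closedBall]; linarith) ζ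
            (by rw [mem_closedBall]; linarith)
          simpa using this
      simpa using this
    rw [negGrad_regular (sg n)]
    have h2 := hnorm ξ (closedBall_subset_closedBall (by linarith) hξ)
    have h3 := norm_sub_le (negGrad (L n g) ξ) (e n • ξ)
    rw [norm_smul, Real.norm_of_nonneg (he0 n).le] at h3
    have h4 : e n * ‖ξ‖ ≤ e₀ * N₀ := mul_le_mul (hee n) h2 (norm_nonneg _) he₀0.le
    linarith
  set P : ℕ → E2 → ℝ := fun n η => regular (e n) (L n G) η + regular (e n) (L n g) η with hP
  have sP : ∀ n, ContDiff ℝ ∞ (P n) := fun n =>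
    (contDiff_regular (sG n) _).add (contDiff_regular (sg n) _)
  have vP : ∀ n, ConvexOn ℝ univ (P n) := fun n =>
    (convexOn_regular (vG n) (he0 n).le).add (convexOn_regular (vg n) (he0 n).le)
  have hPB : ∀ n, ∀ ξ ∈ closedBall c (r + d + 2), |P n ξ| ≤ B₀ := by
    intro n ξ hξ
    have h1 := hnorm ξ hξ
    have h2 := abs_le.1 (hg1 n ξ)
    have h3 := abs_le.1 (hLθm n ξ)
    have h4 := hLθ n ξ
    have h5 := h.g_nonneg ξ
    have h6 := (abs_le.1 (h.lip ξ 0)).2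
    rw [sub_zero] at h6
    have h7 := h.g_zero_le
    have h8 : e n * ‖ξ‖ ^ 2 ≤ e₀ * N₀ ^ 2 :=
      mul_le_mul (hee n) (pow_le_pow_left₀ (norm_nonneg _) h1 2) (by positivity) he₀0.le
    have h9 : 0 ≤ e n * ‖ξ‖ ^ 2 := by have := he0 n; positivity
    simp only [hP, regular]
    rw [abs_le]
    constructor <;> linarith
  have hformula := fun n => setIntegral_newtonF_sub (sG n) (sg n) (vG n) (vg n) (he0 n) (k₁ n)
    (k₂ n) (r₁ n) (r₂ n) (l₁ n) (l₂ n) (heq n) (hgradlt n)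
  have hχs : HasCompactSupport χ := HasCompactSupport.intro (isCompact_closedBall c r) hχ0
  set N := mixedHess newtonF χ with hN
  have sN : Continuous N := (contDiff_mixedHess contDiff_newtonF hχ).continuous
  have hts : tsupport χ ⊆ closedBall c r := closure_minimal (fun η hη => by
    by_contra hn
    exact hη (hχ0 η hn)) isClosed_closedBall
  have hN0 : ∀ ξ, ξ ∉ closedBall c r → N ξ = 0 := fun ξ hξ =>
    mixedHess_eq_zero_of_notMem fun hh => hξ (hts hh)
  have cN : HasCompactSupport N := HasCompactSupport.intro (isCompact_closedBall c r) hN0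
  have tI : Tendsto (fun n => ∫ ξ, P n ξ * N ξ) atTop (𝓝 (∫ ξ, (G ξ + g ξ) * N ξ)) := by
    refine tendsto_integral_of_dominated_convergence (fun ξ => B₀ * |N ξ|)
      (fun n => ((sP n).continuous.mul sN).aestronglyMeasurable)
      ((sN.integrable_of_hasCompactSupport cN).abs.const_mul B₀)
      (fun n => ae_of_all _ fun ξ => ?_) (ae_of_all _ fun ξ => ?_)
    · rw [Real.norm_eq_abs, abs_mul]
      by_cases hξ : ξ ∈ closedBall c r
      · exact mul_le_mul_of_nonneg_right
          (hPB n ξ (closedBall_subset_closedBall (by linarith) hξ)) (abs_nonneg _)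
      · simp [hN0 ξ hξ]
    · refine Tendsto.mul_const _ ?_
      have pt : ∀ f : E2 → ℝ, (∀ ε > 0, ∀ᶠ n in atTop, ∀ ξ, |L n f ξ - f ξ| ≤ ε) →
          Tendsto (fun n => regular (e n) (L n f) ξ) atTop (𝓝 (f ξ)) := by
        intro f hf
        have t1 : Tendsto (fun n => L n f ξ) atTop (𝓝 (f ξ)) := by
          rw [Metric.tendsto_atTop']
          intro ε hε
          obtain ⟨k, hk⟩ := eventually_atTop.1 (hf (ε / 2) (by positivity))
          exact ⟨k, fun n hn => by rw [Real.dist_eq]; linarith [hk n hn.le ξ]⟩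
        simpa [regular] using t1.add (het.mul_const (1 / 2 * ‖ξ‖ ^ 2))
      exact (pt G hLGt).add (pt g hLgt)
  have tJ : Tendsto (fun n => ∫ x in Omega, (newtonF (T₁ n x) - newtonF (T₂ n x))) atTop
      (𝓝 (J v - J u)) := by
    refine (t₁.sub t₂).congr fun n => ?_
    rw [integral_sub (integrableOn_newtonF_comp (k₁ n)) (integrableOn_newtonF_comp (k₂ n))]
  have key : ∀ η > 0, J v - J u ≤ 1 / 2 * ((∫ ξ, (G ξ + g ξ) * N ξ) + (b + η) * (C₀ * B₀)) := by
    intro η hη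
    refine le_of_tendsto_of_tendsto tJ ((tI.add_const _).const_mul _) ?_
    filter_upwards [hLθt η hη] with n hn
    rw [hformula n]
    refine mul_le_mul_of_nonneg_left ?_ (by norm_num)
    set Q := mixedHess newtonF (P n) with hQ
    have sQ : Continuous Q := (contDiff_mixedHess contDiff_newtonF (sP n)).continuous
    have e1 : ∫ ξ, χ ξ * Q ξ = ∫ ξ, P n ξ * N ξ := by
      have := integral_mixedHess_symm hχ (sP n) contDiff_newtonF hχs
      rw [mixedHess_comm χ, mixedHess_comm (P n)] at this
      exact this.symm
    have hs2 : ∀ ξ, ξ ∉ closedBall c (r + d) → L n θ ξ - χ ξ = 0 := fun ξ hξ => by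
      rw [hLeq n ξ hξ, hχ0 ξ fun hh => hξ (closedBall_subset_closedBall (by linarith) hh), sub_zero]
    have sLθ : Continuous (L n θ) := (Lsm n θ hθc).continuous
    have i1 : Integrable fun ξ => χ ξ * Q ξ :=
      (hχ.continuous.mul sQ).integrable_of_hasCompactSupport hχs.mul_right
    have i2 : Integrable fun ξ => (L n θ ξ - χ ξ) * Q ξ :=
      ((sLθ.sub hχ.continuous).mul sQ).integrable_of_hasCompactSupport
        (HasCompactSupport.intro (isCompact_closedBall c (r + d)) fun ξ hξ => by
          show (L n θ ξ - χ ξ) * Q ξ = 0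
          rw [hs2 ξ hξ, zero_mul])
    have e2 : ∫ ξ, (L n G ξ - L n g ξ) * Q ξ
        = (∫ ξ, χ ξ * Q ξ) + ∫ ξ, (L n θ ξ - χ ξ) * Q ξ := by
      rw [← integral_add i1 i2]
      refine integral_congr_ae (ae_of_all _ fun ξ => ?_)
      simp only [hLθ]; ring
    have hbn : 0 ≤ b + η := by have := (abs_nonneg _).trans (hb 0); linarith
    have e3 : ∫ ξ, (L n θ ξ - χ ξ) * Q ξ ≤ (b + η) * (C₀ * B₀) := by
      rw [← setIntegral_eq_integral_of_forall_compl_eq_zero (s := closedBall c (r + d))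
        (fun ξ hξ => by rw [hs2 ξ hξ, zero_mul])]
      have hQB := hC₀b (P n) B₀ (sP n) (vP n)
        (by rw [abs_of_pos (by positivity : 0 < r + d)]; exact hPB n)
      calc _ ≤ ∫ ξ in closedBall c (r + d), (b + η) * |Q ξ| := by
            refine setIntegral_mono_on i2.integrableOn ?_ measurableSet_closedBall fun ξ _ => ?_
            · exact (continuous_const.mul sQ.abs).continuousOn.integrableOn_compact
                (isCompact_closedBall _ _)
            · calc _ ≤ |(L n θ ξ - χ ξ) * Q ξ| := le_abs_self _
                _ = |L n θ ξ - χ ξ| * |Q ξ| := abs_mul _ _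
                _ ≤ _ := by
                  refine mul_le_mul_of_nonneg_right ?_ (abs_nonneg _)
                  have e4 : L n θ ξ - χ ξ = (L n θ ξ - θ ξ) + (G ξ - g ξ - χ ξ) := by
                    simp only [hθ]; ring
                  rw [e4]
                  exact (abs_add_le _ _).trans (by linarith [hn ξ, hb ξ])
        _ = (b + η) * ∫ ξ in closedBall c (r + d), |Q ξ| := integral_const_mul _ _
        _ ≤ _ := mul_le_mul_of_nonneg_left hQB hbn
    rw [e2, e1]
    linarith
  by_contra hneg
  push Not at hneg
  set I := ∫ ξ, (G ξ + g ξ) * N ξ with hI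
  have hCB : 0 ≤ C₀ * B₀ := by positivity
  have hη : 0 < -(C₀ * B₀ * b + I) / (2 * (C₀ * B₀ + 1)) := div_pos (by linarith) (by positivity)
  have h1 := key _ hη
  have h2 : -(C₀ * B₀ * b + I) / (2 * (C₀ * B₀ + 1)) * (C₀ * B₀) ≤ -(C₀ * B₀ * b + I) / 2 := by
    rw [div_mul_eq_mul_div, div_le_div_iff₀ (by positivity) (by norm_num)]
    nlinarith
  nlinarith

theorem ConvexOn.mul_le_mul_ray {D : E2 → ℝ} (hD : ConvexOn ℝ univ D) {ξ₀ : E2} (h0 : D ξ₀ = 0)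
    (v : E2) {s t : ℝ} (hs : 0 ≤ s) (hst : s ≤ t) :
    t * D (ξ₀ + s • v) ≤ s * D (ξ₀ + t • v) := by
  rcases hs.eq_or_lt with rfl | hs
  · simp [h0]
  have ht : 0 < t := hs.trans_le hst
  have ha : 0 ≤ 1 - s / t := by rw [sub_nonneg, div_le_one ht]; exact hst
  have hb : 0 ≤ s / t := by positivity
  have h1 := hD.2 (mem_univ ξ₀) (mem_univ (ξ₀ + t • v)) ha hb (by ring)
  have e1 : (1 - s / t) • ξ₀ + (s / t) • (ξ₀ + t • v) = ξ₀ + s • v := by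
    rw [smul_add, smul_smul, div_mul_cancel₀ _ ht.ne', sub_smul, one_smul]; abel
  rw [e1, h0, smul_zero, zero_add, smul_eq_mul] at h1
  calc _ ≤ t * (s / t * D (ξ₀ + t • v)) := by gcongr
    _ = _ := by field_simp

theorem ConvexOn.le_ray {D : E2 → ℝ} (hD : ConvexOn ℝ univ D) {ξ₀ : E2} (h0 : D ξ₀ = 0)
    (hnn : ∀ ξ, 0 ≤ D ξ) (v : E2) {s t : ℝ} (hs : 0 ≤ s) (hst : s ≤ t) :
    D (ξ₀ + s • v) ≤ D (ξ₀ + t • v) := by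
  rcases (hs.trans hst).eq_or_lt with rfl | ht
  · rw [le_antisymm hst hs]
  have h1 := hD.mul_le_mul_ray h0 v hs hst
  have h2 : s * D (ξ₀ + t • v) ≤ t * D (ξ₀ + t • v) :=
    mul_le_mul_of_nonneg_right hst (hnn _)
  exact le_of_mul_le_mul_left (h1.trans h2) ht

/-- Uniform strict convexity of `g` near the ball of exposed normals. -/
theorem DualSetup.exists_gap {M R ρ m : ℝ} {u g : E2 → ℝ} {c : E2} (h : DualSetup M u g c R ρ m)
    {r d : ℝ} (hrR : r < R) (hd : 0 < d) :
    ∃ c₀ > 0, ∀ ξ₀ q : E2, (∀ η, g ξ₀ + inner ℝ q (η - ξ₀) ≤ g η) → ∀ ξ, d ≤ ‖ξ - ξ₀‖ →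
      (ξ₀ ∈ closedBall c r ∨ ξ ∈ closedBall c r) → c₀ ≤ g ξ - g ξ₀ - inner ℝ q (ξ - ξ₀) := by
  have hgc := h.continuous_g
  set d' := min d (R - r) with hd'
  have hd'0 : 0 < d' := lt_min hd (by linarith)
  set H : E2 × E2 → ℝ := fun p => g p.1 + g (p.1 + p.2) - 2 * g (p.1 + (1 / 2 : ℝ) • p.2) with hH
  have hHc : Continuous H := by
    refine ((hgc.comp continuous_fst).add (hgc.comp (continuous_fst.add continuous_snd))).sub
      (continuous_const.mul (hgc.comp ?_))
    exact continuous_fst.add (continuous_snd.const_smul (1 / 2 : ℝ))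
  obtain ⟨c₀, hc₀, hmin⟩ := ((isCompact_closedBall c r).prod
    (isCompact_sphere (0 : E2) d')).exists_forall_le' hHc.continuousOn (a := 0) (by
      rintro ⟨a, w⟩ ⟨ha, hw⟩
      simp only [mem_closedBall, dist_eq_norm, mem_sphere, sub_zero] at ha hw
      have hmem : a + (1 / 2 : ℝ) • w ∈ closedBall c R := by
        rw [mem_closedBall, dist_eq_norm]
        have e1 : a + (1 / 2 : ℝ) • w - c = (a - c) + (1 / 2 : ℝ) • w := by abel
        have h1 := norm_add_le (a - c) ((1 / 2 : ℝ) • w)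
        rw [norm_smul, hw] at h1
        norm_num at h1
        have : d' ≤ R - r := min_le_right _ _
        rw [e1]
        norm_num
        linarith
      obtain ⟨q, hq⟩ := h.exposed _ hmem
      have hw0 : w ≠ 0 := by
        rintro rfl
        rw [norm_zero] at hw
        linarith
      have h1 := hq a (by
        intro hh
        apply hw0
        have : (1 / 2 : ℝ) • w = 0 := by simpa using hh.symm
        simpa using this)
      have h2 := hq (a + w) (by
        intro hh
        apply hw0
        have h3 : w = (1 / 2 : ℝ) • w := add_left_cancel hh
        have : (1 / 2 : ℝ) • w = 0 := by
          have e : (1 / 2 : ℝ) • w = w - (1 / 2 : ℝ) • w := by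
            rw [eq_sub_iff_add_eq, ← add_smul]; norm_num
          rw [e, sub_eq_zero]; exact h3
        simpa using this)
      have e2 : a - (a + (1 / 2 : ℝ) • w) = -((1 / 2 : ℝ) • w) := by abel
      have e3 : a + w - (a + (1 / 2 : ℝ) • w) = (1 / 2 : ℝ) • w := by
        have : (1 / 2 : ℝ) • w + (1 / 2 : ℝ) • w = w := by rw [← add_smul]; norm_num
        nth_rewrite 1 [← this]; abel
      rw [e2, inner_neg_right] at h1
      rw [e3] at h2
      simp only [hH]
      linarith)
  refine ⟨c₀, hc₀, fun ξ₀ q hq ξ hdξ hor => ?_⟩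
  set D : E2 → ℝ := fun η => g η - g ξ₀ - inner ℝ q (η - ξ₀) with hD
  have hD0 : D ξ₀ = 0 := by simp [hD]
  have hDnn : ∀ η, 0 ≤ D η := fun η => by simp only [hD]; linarith [hq η]
  have hDc : ConvexOn ℝ univ D := by
    refine ⟨convex_univ, fun x _ y _ a b ha hb hab => ?_⟩
    have h1 := h.convex_g.2 (mem_univ x) (mem_univ y) ha hb hab
    simp only [smul_eq_mul, hD, inner_sub_right, inner_add_right, inner_smul_right] at h1 ⊢
    have hb' : b = 1 - a := by linarith
    subst hb'
    nlinarith
  have hHD : ∀ a w, H (a, w) = D a + D (a + w) - 2 * D (a + (1 / 2 : ℝ) • w) := fun a w => by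
    simp only [hH, hD, inner_sub_right, inner_add_right, inner_smul_right]
    ring
  have hn : 0 < ‖ξ - ξ₀‖ := hd.trans_le hdξ
  set t := d' / ‖ξ - ξ₀‖ with ht
  have ht0 : 0 < t := div_pos hd'0 hn
  have ht1 : t ≤ 1 := by rw [ht, div_le_one hn]; exact (min_le_left _ _).trans hdξ
  have htn : ‖t • (ξ - ξ₀)‖ = d' := by
    rw [norm_smul, Real.norm_of_nonneg ht0.le, ht, div_mul_cancel₀ _ hn.ne']
  have ray := fun s₁ s₂ h1 h2 => hDc.le_ray hD0 hDnn (ξ - ξ₀) (s := s₁) (t := s₂) h1 h2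
  show c₀ ≤ D ξ
  rcases hor with hξ | hξ
  · have h1 := hmin (ξ₀, t • (ξ - ξ₀)) ⟨hξ, by simpa using htn⟩
    rw [hHD, hD0] at h1
    have h2 := ray t 1 ht0.le ht1
    rw [one_smul, add_sub_cancel] at h2
    linarith [hDnn (ξ₀ + (1 / 2 : ℝ) • t • (ξ - ξ₀))]
  · have h1 := hmin (ξ, -(t • (ξ - ξ₀))) ⟨hξ, by simpa using htn⟩
    rw [hHD] at h1
    have h2 := ray (1 - t) (1 - t / 2) (by linarith) (by linarith)
    have e1 : ξ₀ + (1 - t) • (ξ - ξ₀) = ξ + -(t • (ξ - ξ₀)) := by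
      rw [sub_smul, one_smul]; abel
    have e2 : ξ₀ + (1 - t / 2) • (ξ - ξ₀) = ξ + (1 / 2 : ℝ) • -(t • (ξ - ξ₀)) := by
      rw [sub_smul, one_smul, smul_neg, smul_smul, one_div_mul_eq_div]; abel
    rw [e1, e2] at h2
    linarith [hDnn (ξ + (1 / 2 : ℝ) • -(t • (ξ - ξ₀)))]

/-- The lower convex envelope: the supremum of the affine minorants. -/
noncomputable def affineEnvelope (f : E2 → ℝ) (ξ : E2) : ℝ :=
  ⨆ p : {p : E2 × ℝ // ∀ η, p.2 + inner ℝ p.1 η ≤ f η}, (p.1.2 + inner ℝ p.1.1 ξ)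

theorem le_affineEnvelope {f : E2 → ℝ} {q : E2} {a : ℝ} (h : ∀ η, a + inner ℝ q η ≤ f η) (ξ : E2) :
    a + inner ℝ q ξ ≤ affineEnvelope f ξ :=
  le_ciSup (f := fun p : {p : E2 × ℝ // ∀ η, p.2 + inner ℝ p.1 η ≤ f η} =>
    p.1.2 + inner ℝ p.1.1 ξ) ⟨f ξ, by rintro _ ⟨p, rfl⟩; exact p.2 ξ⟩ ⟨(q, a), h⟩

theorem affineEnvelope_le {f : E2 → ℝ} {q : E2} {a : ℝ} (h : ∀ η, a + inner ℝ q η ≤ f η) (ξ : E2) :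
    affineEnvelope f ξ ≤ f ξ :=
  have : Nonempty {p : E2 × ℝ // ∀ η, p.2 + inner ℝ p.1 η ≤ f η} := ⟨⟨(q, a), h⟩⟩
  ciSup_le fun p => p.2 ξ

theorem convexOn_affineEnvelope {f : E2 → ℝ} {q : E2} {a : ℝ}
    (h : ∀ η, a + inner ℝ q η ≤ f η) : ConvexOn ℝ univ (affineEnvelope f) := by
  have : Nonempty {p : E2 × ℝ // ∀ η, p.2 + inner ℝ p.1 η ≤ f η} := ⟨⟨(q, a), h⟩⟩
  refine ⟨convex_univ, fun x _ y _ s t hs ht hst => ciSup_le fun p => ?_⟩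
  have h1 := mul_le_mul_of_nonneg_left (le_affineEnvelope p.2 x) hs
  have h2 := mul_le_mul_of_nonneg_left (le_affineEnvelope p.2 y) ht
  simp only [inner_add_right, inner_smul_right, smul_eq_mul]
  have ht' : t = 1 - s := by linarith
  subst ht'
  linarith

theorem mixedHess_const_mul {a b : E2 → ℝ} (hb : ContDiff ℝ ∞ b) (s : ℝ) (ξ : E2) :
    mixedHess a (fun η => s * b η) ξ = s * mixedHess a b ξ := by
  have e : ∀ i, pd i (fun η => s * b η) = fun η => s * pd i b η := fun i =>
    pd_const_mul (smooth_diff hb) s i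
  have e2 : ∀ i j, pd i (pd j fun η => s * b η) ξ = s * pd i (pd j b) ξ := fun i j => by
    rw [e, pd_const_mul (smooth_diff (contDiff_pd hb j)) s i]
  simp only [mixedHess, e2]
  ring

/-- First variation in both directions: `g` is weakly orthogonal to `mixedHess newtonF χ`. -/
theorem DualSetup.integral_nonneg {M R ρ m : ℝ} {u g : E2 → ℝ} {c : E2}
    (h : DualSetup M u g c R ρ m) {r₀ : ℝ} (hr₀ : 0 < r₀) (hr₀R : r₀ < R) {χ : E2 → ℝ}
    (hχ : ContDiff ℝ ∞ χ) (hχ0 : ∀ ξ, ξ ∉ closedBall c r₀ → χ ξ = 0) :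
    0 ≤ ∫ ξ, g ξ * mixedHess newtonF χ ξ := by
  have hgc := h.continuous_g
  set r := (r₀ + R) / 2 with hr
  have hrr : r₀ < r := by rw [hr]; linarith
  have hrR : r < R := by rw [hr]; linarith
  have hsub : closedBall c r₀ ⊆ closedBall c r := closedBall_subset_closedBall hrr.le
  obtain ⟨C, hC, hdual⟩ := h.dual_inequality (hr₀.trans hrr) hrR
  have hχs : HasCompactSupport χ := HasCompactSupport.intro (isCompact_closedBall c r₀) hχ0
  have hχu : UniformContinuous χ := hχs.uniformContinuous_of_continuous hχ.continuous
  obtain ⟨A, hA⟩ := hχs.exists_bound_of_continuous hχ.continuous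
  simp only [Real.norm_eq_abs] at hA
  have hA0 : 0 ≤ A := (abs_nonneg _).trans (hA 0)
  set N : E2 → ℝ := mixedHess newtonF χ with hN
  have hNc : Continuous N := (contDiff_mixedHess contDiff_newtonF hχ).continuous
  have hNs : HasCompactSupport N := hχs.mono' fun ξ hξ => by
    by_contra hh
    exact hξ (mixedHess_eq_zero_of_notMem hh)
  have hNi : Integrable N := hNc.integrable_of_hasCompactSupport hNs
  have hgN : Integrable fun ξ => g ξ * N ξ :=
    (hgc.mul hNc).integrable_of_hasCompactSupport hNs.mul_left
  have key : ∀ η > 0, 0 ≤ C * η + 2 * ∫ ξ, g ξ * N ξ := by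
    intro η hη
    obtain ⟨d₀, hd₀, hd₀b⟩ := Metric.uniformContinuous_iff.1 hχu η hη
    set d := min d₀ (r - r₀) with hd
    have hd0 : 0 < d := lt_min hd₀ (by linarith)
    obtain ⟨c₀, hc₀, hgap⟩ := h.exists_gap hrR hd0
    have hev : ∀ᶠ s in 𝓝[>] (0 : ℝ),
        0 ≤ C * η + 2 * (∫ ξ, g ξ * N ξ) + s * ((A + η) * ∫ ξ, |N ξ|) := by
      have l1 : ∀ᶠ s in 𝓝[>] (0 : ℝ), s * (2 * A) < c₀ :=
        ((continuous_id.mul continuous_const).tendsto' (0 : ℝ) 0 (by simp)).mono_left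
          nhdsWithin_le_nhds |>.eventually_lt_const hc₀
      have l2 : ∀ᶠ s in 𝓝[>] (0 : ℝ), s * (A + η) < m :=
        ((continuous_id.mul continuous_const).tendsto' (0 : ℝ) 0 (by simp)).mono_left
          nhdsWithin_le_nhds |>.eventually_lt_const h.m_pos
      filter_upwards [l1, l2, self_mem_nhdsWithin] with s h1 h2 hs
      replace hs : 0 < s := hs
      set f : E2 → ℝ := fun ξ => g ξ + s * χ ξ with hf
      have hsA : ∀ ξ, |s * χ ξ| ≤ s * A := fun ξ => by
        rw [abs_mul, abs_of_pos hs]; exact mul_le_mul_of_nonneg_left (hA ξ) hs.le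
      have minor_in : ∀ ξ₀ ∈ closedBall c r, ∀ q : E2, (∀ ζ, g ξ₀ + inner ℝ q (ζ - ξ₀) ≤ g ζ) →
          ∀ ζ, (g ξ₀ + s * χ ξ₀ - s * η - inner ℝ q ξ₀) + inner ℝ q ζ ≤ f ζ := by
        intro ξ₀ hξ₀ q hq ζ
        have hq1 := hq ζ
        by_cases hζ : d ≤ ‖ζ - ξ₀‖
        · have := hgap ξ₀ q hq ζ hζ (Or.inl hξ₀)
          have a1 := (abs_le.1 (hsA ξ₀)).2
          have a2 := (abs_le.1 (hsA ζ)).1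
          rw [inner_sub_right] at this
          simp only [hf]
          nlinarith
        · have hlt : dist ζ ξ₀ < d₀ := by
            rw [dist_eq_norm]; exact (not_le.1 hζ).trans_le (min_le_left _ _)
          have h3 := hd₀b hlt
          rw [Real.dist_eq] at h3
          have h4 := (abs_lt.1 h3).1
          have h5 : s * (χ ξ₀ - η) ≤ s * χ ζ := mul_le_mul_of_nonneg_left (by linarith) hs.le
          rw [inner_sub_right] at hq1
          simp only [hf]
          nlinarith
      have minor_out : ∀ ξ₀, ξ₀ ∉ closedBall c r → ∀ q : E2,
          (∀ ζ, g ξ₀ + inner ℝ q (ζ - ξ₀) ≤ g ζ) →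
          ∀ ζ, (g ξ₀ - inner ℝ q ξ₀) + inner ℝ q ζ ≤ f ζ := by
        intro ξ₀ hξ₀ q hq ζ
        have hq1 := hq ζ
        by_cases hζ : ζ ∈ closedBall c r₀
        · have hdist : d ≤ ‖ζ - ξ₀‖ := by
            rw [← dist_eq_norm]
            have h3 := dist_triangle ξ₀ ζ c
            rw [dist_comm ξ₀ ζ] at h3
            have h4 : r < dist ξ₀ c := not_le.1 hξ₀
            have h5 : dist ζ c ≤ r₀ := hζ
            exact (min_le_right _ _).trans (by linarith)
          have := hgap ξ₀ q hq ζ hdist (Or.inr (hsub hζ))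
          have a2 := (abs_le.1 (hsA ζ)).1
          have : 0 ≤ s * A := by positivity
          rw [inner_sub_right] at *
          simp only [hf]
          nlinarith
        · rw [inner_sub_right] at hq1
          simp only [hf, hχ0 ζ hζ]
          linarith
      obtain ⟨q₀, hq₀⟩ := h.subgrad c
      have hm0 := minor_in c (mem_closedBall_self (hr₀.trans hrr).le) q₀ hq₀
      set G := affineEnvelope f with hG
      have hGf : ∀ ξ, G ξ ≤ f ξ := affineEnvelope_le hm0
      have hGout : ∀ ξ, ξ ∉ closedBall c r → G ξ = g ξ := by
        intro ξ hξ
        obtain ⟨q, hq⟩ := h.subgrad ξ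
        have h3 := le_affineEnvelope (minor_out ξ hξ q hq) ξ
        have h4 := hGf ξ
        have h5 : χ ξ = 0 := hχ0 ξ fun hh => hξ (hsub hh)
        simp only [hf, h5] at h4
        rw [hG] at h4 ⊢
        linarith
      have hGb : ∀ ξ, |G ξ - g ξ - s * χ ξ| ≤ s * η := by
        intro ξ
        by_cases hξ : ξ ∈ closedBall c r
        · obtain ⟨q, hq⟩ := h.subgrad ξ
          have h3 := le_affineEnvelope (minor_in ξ hξ q hq) ξ
          have h4 := hGf ξ
          simp only [hf] at h4
          have : 0 ≤ s * η := by positivity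
          rw [abs_le]
          constructor
          · rw [hG]; linarith
          · linarith
        · rw [hGout ξ hξ, hχ0 ξ fun hh => hξ (hsub hh)]
          simp only [sub_self, mul_zero, abs_zero]
          positivity
      have hGg : ∀ ξ, |G ξ - g ξ| ≤ s * (A + η) := fun ξ => by
        have e1 : G ξ - g ξ = (G ξ - g ξ - s * χ ξ) + s * χ ξ := by ring
        rw [e1]
        exact (abs_add_le _ _).trans (by linarith [hGb ξ, hsA ξ])
      have hGconv : ConvexOn ℝ univ G := convexOn_affineEnvelope hm0
      have hGc : Continuous G := continuousOn_univ.1 (hGconv.continuousOn isOpen_univ)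
      have h3 := hdual G (fun ξ => s * χ ξ) (s * η) hGconv (fun ξ => (hGg ξ).trans h2.le) hGout
        (contDiff_const.mul hχ) (fun ξ hξ => by rw [hχ0 ξ fun hh => hξ (hsub hh), mul_zero]) hGb
      simp only [mixedHess_const_mul hχ] at h3
      have i1 : Integrable fun ξ => (G ξ - g ξ) * N ξ :=
        ((hGc.sub hgc).mul hNc).integrable_of_hasCompactSupport hNs.mul_left
      have e2 : ∫ ξ, (G ξ + g ξ) * (s * mixedHess newtonF χ ξ)
          = s * (2 * (∫ ξ, g ξ * N ξ) + ∫ ξ, (G ξ - g ξ) * N ξ) := by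
        rw [← integral_const_mul, ← integral_add (hgN.const_mul 2) i1, ← integral_const_mul]
        refine integral_congr_ae (ae_of_all _ fun ξ => ?_)
        simp only [hN]; ring
      have e3 : ∫ ξ, (G ξ - g ξ) * N ξ ≤ s * ((A + η) * ∫ ξ, |N ξ|) := by
        rw [← mul_assoc, ← integral_const_mul]
        refine integral_mono i1 (hNi.abs.const_mul _) fun ξ => ?_
        calc (G ξ - g ξ) * N ξ ≤ |(G ξ - g ξ) * N ξ| := le_abs_self _
          _ = |G ξ - g ξ| * |N ξ| := abs_mul _ _
          _ ≤ _ := mul_le_mul_of_nonneg_right (hGg ξ) (abs_nonneg _)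
      rw [e2] at h3
      have h4 : 0 ≤ s * (C * η + (2 * (∫ ξ, g ξ * N ξ) + ∫ ξ, (G ξ - g ξ) * N ξ)) := by linarith
      have h5 := nonneg_of_mul_nonneg_right h4 hs
      linarith
    have hlim : Tendsto (fun s : ℝ => C * η + 2 * (∫ ξ, g ξ * N ξ) + s * ((A + η) * ∫ ξ, |N ξ|))
        (𝓝[>] 0) (𝓝 (C * η + 2 * ∫ ξ, g ξ * N ξ)) :=
      ((continuous_const.add (continuous_id.mul continuous_const)).tendsto' (0 : ℝ) _
        (by simp)).mono_left nhdsWithin_le_nhds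
    exact ge_of_tendsto hlim hev
  have hlim : Tendsto (fun η : ℝ => C * η + 2 * ∫ ξ, g ξ * N ξ) (𝓝[>] 0)
      (𝓝 (2 * ∫ ξ, g ξ * N ξ)) :=
    (((continuous_const.mul continuous_id).add continuous_const).tendsto' (0 : ℝ) _
      (by simp)).mono_left nhdsWithin_le_nhds
  have := ge_of_tendsto hlim (by filter_upwards [self_mem_nhdsWithin] with η hη using key η hη)
  linarith

theorem DualSetup.integral_eq_zero {M R ρ m : ℝ} {u g : E2 → ℝ} {c : E2}
    (h : DualSetup M u g c R ρ m) {r₀ : ℝ} (hr₀ : 0 < r₀) (hr₀R : r₀ < R) {χ : E2 → ℝ}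
    (hχ : ContDiff ℝ ∞ χ) (hχ0 : ∀ ξ, ξ ∉ closedBall c r₀ → χ ξ = 0) :
    ∫ ξ, g ξ * mixedHess newtonF χ ξ = 0 := by
  refine le_antisymm ?_ (h.integral_nonneg hr₀ hr₀R hχ hχ0)
  have h1 := h.integral_nonneg hr₀ hr₀R (contDiff_const.mul hχ : ContDiff ℝ ∞ fun ξ => -1 * χ ξ)
    (fun ξ hξ => by rw [hχ0 ξ hξ, mul_zero])
  simp only [mixedHess_const_mul hχ] at h1
  have e : ∫ ξ, g ξ * (-1 * mixedHess newtonF χ ξ) = - ∫ ξ, g ξ * mixedHess newtonF χ ξ := by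
    rw [← integral_neg]
    exact integral_congr_ae (ae_of_all _ fun ξ => by ring)
  linarith

theorem pd_newtonF (i : Fin 2) :
    pd i newtonF = fun ξ => (-2 * ξ i) * (newtonF ξ * newtonF ξ) := by
  funext ξ
  have hw : ‖ξ‖ ^ 2 + 1 ≠ 0 := by positivity
  have h1 : HasFDerivAt (fun ξ : E2 => ‖ξ‖ ^ 2 + 1) (2 • innerSL ℝ ξ) ξ :=
    (hasStrictFDerivAt_norm_sq ξ).hasFDerivAt.add_const 1
  have h2 : HasFDerivAt newtonF (-((‖ξ‖ ^ 2 + 1) ^ 2)⁻¹ • (2 • innerSL ℝ ξ)) ξ := by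
    have := (hasDerivAt_inv hw).comp_hasFDerivAt ξ h1
    refine this.congr_of_eventuallyEq (Eventually.of_forall fun η => ?_)
    simp [newtonF]
  rw [pd, h2.fderiv]
  have : inner ℝ ξ (bvec i) = ξ i := by
    simp [bvec, EuclideanSpace.inner_single_right]
  simp only [smul_apply, innerSL_apply_apply, this, newtonF, smul_eq_mul,
    nsmul_eq_mul]
  field_simp
  push_cast
  ring

theorem pd_pd_newtonF (i j : Fin 2) (ξ : E2) :
    pd i (pd j newtonF) ξ
      = -2 * (if i = j then 1 else 0) * newtonF ξ ^ 2 + 8 * ξ i * ξ j * newtonF ξ ^ 3 := by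
  have hF := smooth_diff contDiff_newtonF
  have hc : Differentiable ℝ (fun ξ : E2 => ξ j) :=
    (EuclideanSpace.proj j : E2 →L[ℝ] ℝ).differentiable
  rw [pd_newtonF, pd_mul (hc.const_mul (-2)) (hF.fun_mul hF), pd_const_mul hc, pd_coord,
    pd_mul hF hF, pd_newtonF]
  ring

theorem pd_inner (q : E2) (i : Fin 2) : pd i (fun ξ : E2 => inner ℝ q ξ) = fun _ => q i := by
  funext ξ
  have h : HasFDerivAt (fun ξ : E2 => inner ℝ q ξ) (innerSL ℝ q) ξ := (innerSL ℝ q).hasFDerivAt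
  rw [pd, h.fderiv]
  simp [bvec, EuclideanSpace.inner_single_right]

/-- A smooth convex ridge function of linear growth, with minimum `1` on the line
`⟪c, ξ - c⟫ = 0`. -/
noncomputable def ridge (c : E2) : E2 → ℝ := fun ξ => √(1 + inner ℝ c (ξ - c) ^ 2)

theorem contDiff_ridge (c : E2) : ContDiff ℝ ∞ (ridge c) := by
  have h : ContDiff ℝ ∞ fun ξ : E2 => 1 + inner ℝ c (ξ - c) ^ 2 :=
    contDiff_const.add ((contDiff_const.inner ℝ (contDiff_id.sub contDiff_const)).pow 2)
  exact h.sqrt fun ξ => by positivity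

theorem ridge_mul_self (c ξ : E2) : ridge c ξ * ridge c ξ = 1 + inner ℝ c (ξ - c) ^ 2 :=
  Real.mul_self_sqrt (by positivity)

theorem one_le_ridge (c ξ : E2) : 1 ≤ ridge c ξ :=
  Real.one_le_sqrt.2 (by linarith [sq_nonneg (inner ℝ c (ξ - c))])

theorem ridge_le (c ξ : E2) : ridge c ξ ≤ 1 + ‖c‖ * ‖ξ - c‖ := by
  have h1 : |inner ℝ c (ξ - c)| ≤ ‖c‖ * ‖ξ - c‖ := abs_real_inner_le_norm _ _
  refine Real.sqrt_le_iff.2 ⟨by positivity, ?_⟩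
  have h2 : inner ℝ c (ξ - c) ^ 2 ≤ (‖c‖ * ‖ξ - c‖) ^ 2 := sq_le_sq' (abs_le.1 h1).1 (abs_le.1 h1).2
  nlinarith [norm_nonneg c, norm_nonneg (ξ - c), mul_nonneg (norm_nonneg c) (norm_nonneg (ξ - c))]

theorem convexOn_ridge (c : E2) : ConvexOn ℝ univ (ridge c) := by
  refine ⟨convex_univ, fun x _ y _ a b ha hb hab => ?_⟩
  have hx := ridge_mul_self c x
  have hy := ridge_mul_self c y
  have hx0 := one_le_ridge c x
  have hy0 := one_le_ridge c y
  set X := ridge c x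
  set Y := ridge c y
  have e : inner ℝ c (a • x + b • y - c) = a * inner ℝ c (x - c) + b * inner ℝ c (y - c) := by
    have : a • x + b • y - c = a • (x - c) + b • (y - c) := by
      have : c = a • c + b • c := by rw [← add_smul, hab, one_smul]
      nth_rewrite 1 [this]
      simp only [smul_sub]; abel
    rw [this, inner_add_right, inner_smul_right, inner_smul_right]
  set t := inner ℝ c (x - c)
  set s := inner ℝ c (y - c)
  have hXY : 1 + t * s ≤ X * Y := by
    refine le_of_sq_le_sq ?_ (by positivity)
    have : (X * Y) ^ 2 = (1 + t ^ 2) * (1 + s ^ 2) := by rw [← hx, ← hy]; ring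
    rw [this]
    nlinarith [sq_nonneg (t - s)]
  rw [ridge, e, smul_eq_mul, smul_eq_mul]
  refine Real.sqrt_le_iff.2 ⟨by positivity, ?_⟩
  have h1 := mul_le_mul_of_nonneg_left hXY (mul_nonneg ha hb)
  have hb' : b = 1 - a := by linarith
  subst hb'
  linear_combination 2 * h1 - a ^ 2 * hx - (1 - a) ^ 2 * hy

theorem pd_pd_ridge (c : E2) (i j : Fin 2) : pd i (pd j (ridge c)) c = c i * c j := by
  have hS := contDiff_ridge c
  have dS := smooth_diff hS
  have dL : Differentiable ℝ fun ξ : E2 => inner ℝ c ξ := (innerSL ℝ c).differentiable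
  have dL' : Differentiable ℝ fun ξ : E2 => inner ℝ c ξ - ‖c‖ ^ 2 := dL.sub_const _
  have hconst : ∀ (k : Fin 2) (a : ℝ), pd k (fun _ : E2 => a) = fun _ => 0 := fun k a => by
    funext ξ; simp [pd]
  have pL : ∀ k, pd k (fun ξ : E2 => inner ℝ c ξ - ‖c‖ ^ 2) = fun _ => c k := fun k => by
    rw [pd_sub dL (differentiable_const _), pd_inner, hconst]; simp
  have hfun : (fun ξ => ridge c ξ * ridge c ξ)
      = fun ξ => 1 + (inner ℝ c ξ - ‖c‖ ^ 2) * (inner ℝ c ξ - ‖c‖ ^ 2) := by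
    funext ξ
    rw [ridge_mul_self, inner_sub_right, real_inner_self_eq_norm_sq]; ring
  have h1 : ∀ k, (fun ξ => ridge c ξ * pd k (ridge c) ξ)
      = fun ξ => c k * (inner ℝ c ξ - ‖c‖ ^ 2) := fun k => by
    have := congrArg (pd k) hfun
    rw [pd_mul dS dS, pd_add (differentiable_const _) (dL'.fun_mul dL'), pd_mul dL' dL', pL,
      hconst] at this
    funext ξ
    have := congrFun this ξ
    simp only at this
    linarith
  have hc1 : ridge c c = 1 := by simp [ridge]
  have hL0 : inner ℝ c c - ‖c‖ ^ 2 = 0 := by rw [real_inner_self_eq_norm_sq, sub_self]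
  have h2 : ∀ k, pd k (ridge c) c = 0 := fun k => by
    have := congrFun (h1 k) c
    simpa [hc1, hL0] using this
  have h3 := congrFun (congrArg (pd i) (h1 j)) c
  rw [pd_mul dS (smooth_diff (contDiff_pd hS j)), pd_const_mul dL', pL] at h3
  simp only [h2, hc1, zero_mul, one_mul, zero_add] at h3
  rw [h3, mul_comm]

theorem mixedHess_newtonF_ridge (c : E2) :
    mixedHess newtonF (ridge c) c = -2 * ‖c‖ ^ 2 * newtonF c ^ 2 := by
  have hn : ‖c‖ ^ 2 = c 0 ^ 2 + c 1 ^ 2 := by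
    rw [EuclideanSpace.norm_sq_eq]; simp [Fin.sum_univ_two]
  simp only [mixedHess, pd_pd_newtonF, pd_pd_ridge, hn]
  norm_num
  ring

theorem mixedHess_affine_add {a b : E2 → ℝ} (hb : ContDiff ℝ ∞ b) (α κ : ℝ) (q ξ : E2) :
    mixedHess a (fun η => α + inner ℝ q η + κ * b η) ξ = κ * mixedHess a b ξ := by
  have dL : Differentiable ℝ fun ξ : E2 => inner ℝ q ξ := (innerSL ℝ q).differentiable
  have hconst : ∀ (k : Fin 2) (a : ℝ), pd k (fun _ : E2 => a) = fun _ => 0 := fun k a => by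
    funext ξ; simp [pd]
  have e : ∀ j, pd j (fun η => α + inner ℝ q η + κ * b η) = fun η => q j + κ * pd j b η := fun j => by
    rw [pd_add ((differentiable_const _).fun_add dL) ((smooth_diff hb).const_mul κ),
      pd_add (differentiable_const _) dL, pd_const_mul (smooth_diff hb), pd_inner, hconst]
    simp
  have e2 : ∀ i j, pd i (pd j fun η => α + inner ℝ q η + κ * b η) ξ = κ * pd i (pd j b) ξ :=
    fun i j => by
      have hj := smooth_diff (contDiff_pd hb j)
      rw [e, pd_add (differentiable_const _) (hj.const_mul κ), pd_const_mul hj, hconst]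
      simp
  simp only [mixedHess, e2]
  ring

theorem DualSetup.false {M R ρ m : ℝ} {u g : E2 → ℝ} {c : E2} (h : DualSetup M u g c R ρ m) :
    False := by
  have hgc := h.continuous_g
  have hR := h.R_pos
  have hc0 : c ≠ 0 := fun hc => h.zero_notMem (by rw [hc]; exact mem_closedBall_self hR.le)
  have hcn : 0 < ‖c‖ := norm_pos_iff.2 hc0
  have sF := contDiff_newtonF
  have sS := contDiff_ridge c
  set Q : E2 → ℝ := mixedHess newtonF (ridge c) with hQ
  have hQc : Continuous Q := (contDiff_mixedHess sF sS).continuous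
  set κ₁ : ℝ := ‖c‖ ^ 2 * newtonF c ^ 2 with hκ₁
  have hκ₁0 : 0 < κ₁ := by
    have : 0 < newtonF c := by unfold newtonF; positivity
    positivity
  have hQneg : ∀ᶠ ξ in 𝓝 c, Q ξ < -κ₁ :=
    hQc.continuousAt.eventually_lt_const (by rw [hQ, mixedHess_newtonF_ridge]; linarith)
  obtain ⟨d₀, hd₀, hd₀b⟩ := Metric.eventually_nhds_iff.1 hQneg
  set d := min d₀ (R / 2) with hd
  have hd0 : 0 < d := lt_min hd₀ (by linarith)
  have hdR : d ≤ R / 2 := min_le_right _ _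
  obtain ⟨C, hC, hdual⟩ := h.dual_inequality (r := R / 2) (by linarith) (by linarith)
  obtain ⟨c₀, hc₀, hgap⟩ := h.exists_gap (r := R / 2) (by linarith) hd0
  obtain ⟨q, hq⟩ := h.subgrad c
  have hm0 := h.m_pos
  set ε := min c₀ m / 2 with hε
  have hε0 : 0 < ε := by have : 0 < min c₀ m := lt_min hc₀ hm0
                         positivity
  have hεc : 2 * ε ≤ c₀ := by have := min_le_left c₀ m
                              linarith
  have hεm : 2 * ε ≤ m := by have := min_le_right c₀ m
                             linarith
  set κ := ε / (‖c‖ * d) with hκ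
  have hκ0 : 0 < κ := by positivity
  have hκe : ∀ x : ℝ, κ * (‖c‖ * x) = ε * x / d := fun x => by rw [hκ]; field_simp
  set α := g c - inner ℝ q c + ε - κ with hα
  set P : E2 → ℝ := fun ξ => α + inner ℝ q ξ + κ * ridge c ξ with hP
  have sP : ContDiff ℝ ∞ P :=
    (contDiff_const.add (contDiff_const.inner ℝ contDiff_id)).add (contDiff_const.mul sS)
  have vP : ConvexOn ℝ univ P := by
    refine ⟨convex_univ, fun x _ y _ a b ha hb hab => ?_⟩
    have h1 := (convexOn_ridge c).2 (mem_univ x) (mem_univ y) ha hb hab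
    have h2 := mul_le_mul_of_nonneg_left h1 hκ0.le
    simp only [smul_eq_mul, hP, inner_add_right, inner_smul_right] at h2 ⊢
    have hb' : b = 1 - a := by linarith
    subst hb'
    linarith
  have hPge : ∀ ξ, P ξ ≤ g c + inner ℝ q (ξ - c) + ε + ε * ‖ξ - c‖ / d := fun ξ => by
    have h1 := mul_le_mul_of_nonneg_left (ridge_le c ξ) hκ0.le
    rw [mul_add, hκe] at h1
    simp only [hP, hα, inner_sub_right]
    linarith
  have hPc : P c = g c + ε := by
    have : ridge c c = 1 := by simp [ridge]
    simp only [hP, hα, this]; ring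
  have hout : ∀ ξ, d ≤ ‖ξ - c‖ → P ξ ≤ g ξ := by
    intro ξ hξ
    set D : E2 → ℝ := fun η => g η - g c - inner ℝ q (η - c) with hD
    have hDc : ConvexOn ℝ univ D := by
      refine ⟨convex_univ, fun x _ y _ a b ha hb hab => ?_⟩
      have h1 := h.convex_g.2 (mem_univ x) (mem_univ y) ha hb hab
      simp only [smul_eq_mul, hD, inner_sub_right, inner_add_right, inner_smul_right] at h1 ⊢
      have hb' : b = 1 - a := by linarith
      subst hb'
      nlinarith
    have hn : 0 < ‖ξ - c‖ := hd0.trans_le hξ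
    have h1 := hDc.mul_le_mul_ray (ξ₀ := c) (by simp [hD]) (ξ - c) (s := d / ‖ξ - c‖) (t := 1) (by positivity)
      (by rw [div_le_one hn]; exact hξ)
    rw [one_mul, one_smul, add_sub_cancel] at h1
    have h2 := hgap c q hq (c + (d / ‖ξ - c‖) • (ξ - c)) (by
      rw [add_sub_cancel_left, norm_smul, Real.norm_of_nonneg (by positivity),
        div_mul_cancel₀ _ hn.ne']) (Or.inl (mem_closedBall_self (by linarith)))
    have h3 : c₀ ≤ d / ‖ξ - c‖ * D ξ := h2.trans h1
    have h4 : c₀ * (‖ξ - c‖ / d) ≤ D ξ := by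
      calc _ ≤ d / ‖ξ - c‖ * D ξ * (‖ξ - c‖ / d) := by gcongr
        _ = D ξ := by field_simp
    have h5 : 1 ≤ ‖ξ - c‖ / d := by rwa [one_le_div hd0]
    have h6 := hPge ξ
    rw [mul_div_assoc] at h6
    simp only [hD] at h4
    nlinarith
  have hin : ∀ ξ, ‖ξ - c‖ ≤ d → P ξ - g ξ ≤ m := by
    intro ξ hξ
    have h1 := hPge ξ
    have h2 : ε * ‖ξ - c‖ / d ≤ ε := by
      rw [div_le_iff₀ hd0]; exact mul_le_mul_of_nonneg_left hξ hε0.le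
    linarith [hq ξ]
  set G : E2 → ℝ := fun ξ => max (g ξ) (P ξ) with hG
  have vG : ConvexOn ℝ univ G := h.convex_g.sup vP
  have hGg : ∀ ξ, G ξ - g ξ = max (P ξ - g ξ) 0 := fun ξ => by
    simp only [hG]
    rcases le_total (g ξ) (P ξ) with hh | hh
    · rw [max_eq_right hh, max_eq_left (by linarith)]
    · rw [max_eq_left hh, max_eq_right (by linarith), sub_self]
  have hGm : ∀ ξ, |G ξ - g ξ| ≤ m := fun ξ => by
    rw [hGg, abs_of_nonneg (le_max_right _ _)]
    refine max_le ?_ hm0.le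
    rcases le_total d ‖ξ - c‖ with hh | hh
    · linarith [hout ξ hh]
    · exact hin ξ hh
  have hpos : ∀ ξ, g ξ < P ξ → ‖ξ - c‖ < d := fun ξ hξ => by
    by_contra hh
    exact absurd (hout ξ (not_lt.1 hh)) (not_le.2 hξ)
  have hballd : ∀ ξ, ‖ξ - c‖ < d → ξ ∈ closedBall c (R / 2) := fun ξ hξ => by
    rw [mem_closedBall, dist_eq_norm]; linarith
  have hGout : ∀ ξ, ξ ∉ closedBall c (R / 2) → G ξ = g ξ := fun ξ hξ =>
    max_eq_left (not_lt.1 fun hh => hξ (hballd ξ (hpos ξ hh)))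
  have hdiffc : Continuous fun ξ => P ξ - g ξ := sP.continuous.sub hgc
  obtain ⟨δ₁, hδ₁, hδ₁b⟩ := Metric.eventually_nhds_iff.1
    (hdiffc.continuousAt.eventually_const_lt
      (by show ε / 2 < P c - g c; rw [hPc]; linarith) : ∀ᶠ ξ in 𝓝 c, ε / 2 < P ξ - g ξ)
  set V := volume.real (ball c δ₁) with hV
  have hV0 : 0 < V := ENNReal.toReal_pos (measure_ball_pos volume c hδ₁).ne' measure_ball_lt_top.ne
  set X := κ * κ₁ * (ε / 4 * V) with hX
  have hX0 : 0 < X := by positivity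
  have key : ∀ η > 0, η ≤ ε / 8 → X ≤ C * (2 * η) := by
    intro η hη hηε
    set ψ : E2 → ℝ := fun ξ => max (P ξ - g ξ - η) 0 with hψ
    have ψc : Continuous ψ := (hdiffc.sub continuous_const).max continuous_const
    have θc : Continuous fun ξ => max (P ξ - g ξ) 0 := hdiffc.max continuous_const
    have θs : HasCompactSupport fun ξ => max (P ξ - g ξ) 0 :=
      HasCompactSupport.intro (isCompact_closedBall c (R / 2)) fun ξ hξ =>
        max_eq_right (by
          have : ¬ g ξ < P ξ := fun hh => hξ (hballd ξ (hpos ξ hh))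
          linarith)
    have ψs : HasCompactSupport ψ :=
      HasCompactSupport.intro (isCompact_closedBall c (R / 2)) fun ξ hξ =>
        max_eq_right (by
          have : ¬ g ξ < P ξ := fun hh => hξ (hballd ξ (hpos ξ hh))
          linarith)
    obtain ⟨s₁, hs₁, hs₁b⟩ := Metric.uniformContinuous_iff.1
      (θs.uniformContinuous_of_continuous θc) η hη
    obtain ⟨s₂, hs₂, hs₂b⟩ := Metric.uniformContinuous_iff.1
      (ψs.uniformContinuous_of_continuous ψc) η hη
    obtain ⟨L, Lsm, -, -, Lcl, -, Lnn⟩ := exists_mollifier (lt_min hs₁ hs₂)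
    set χ := L ψ with hχ
    have sχ : ContDiff ℝ ∞ χ := Lsm ψ ψc
    have χnn : ∀ ξ, 0 ≤ χ ξ := Lnn ψ fun ξ => le_max_right _ _
    have χψ : ∀ ξ, |χ ξ - ψ ξ| ≤ η := fun ξ => Lcl ψ ψc ξ _ _ fun ζ hζ => by
      have := hs₂b ((mem_ball.1 hζ).trans_le (min_le_right _ _))
      rw [Real.dist_eq] at this
      exact this.le
    have χsupp : ∀ ξ, χ ξ ≠ 0 → g ξ < P ξ := by
      intro ξ hξ
      by_contra hh
      apply hξ
      have := Lcl ψ ψc ξ 0 0 fun ζ hζ => by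
        have h1 := hs₁b ((mem_ball.1 hζ).trans_le (min_le_left _ _))
        rw [Real.dist_eq, max_eq_right (by linarith : P ξ - g ξ ≤ 0), sub_zero] at h1
        have h2 := (abs_lt.1 h1).2
        have h3 : P ζ - g ζ < η := (le_max_left _ _).trans_lt h2
        simp only [hψ]
        rw [max_eq_right (by linarith), sub_zero, abs_zero]
      rw [sub_zero] at this
      exact abs_nonpos_iff.1 this
    have χ0 : ∀ ξ, ξ ∉ closedBall c (R / 2) → χ ξ = 0 := fun ξ hξ => by
      by_contra hh
      exact hξ (hballd ξ (hpos ξ (χsupp ξ hh)))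
    have χs : HasCompactSupport χ := HasCompactSupport.intro (isCompact_closedBall c (R / 2)) χ0
    have htsupp : ∀ ξ ∈ tsupport χ, g ξ ≤ P ξ := fun ξ hξ =>
      closure_minimal (fun ζ hζ => (χsupp ζ hζ).le) (isClosed_le hgc sP.continuous) hξ
    have hclose : ∀ ξ, |G ξ - g ξ - χ ξ| ≤ 2 * η := fun ξ => by
      have h1 : |max (P ξ - g ξ) 0 - ψ ξ| ≤ η := by
        have := abs_max_sub_max_le_abs (P ξ - g ξ) (P ξ - g ξ - η) 0
        rwa [sub_sub_cancel, abs_of_pos hη] at this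
      have e1 : G ξ - g ξ - χ ξ = (max (P ξ - g ξ) 0 - ψ ξ) - (χ ξ - ψ ξ) := by rw [hGg]; ring
      rw [e1]
      exact (abs_sub _ _).trans (by linarith [χψ ξ])
    have h1 := hdual G χ (2 * η) vG hGm hGout sχ χ0 hclose
    set N := mixedHess newtonF χ with hN
    have hNc : Continuous N := (contDiff_mixedHess sF sχ).continuous
    have hNs : HasCompactSupport N := χs.mono' fun ξ hξ => by
      by_contra hh
      exact hξ (mixedHess_eq_zero_of_notMem hh)
    have e1 : ∫ ξ, (G ξ + g ξ) * N ξ = (∫ ξ, P ξ * N ξ) + ∫ ξ, g ξ * N ξ := by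
      have i1 : Integrable fun ξ => P ξ * N ξ :=
        (sP.continuous.mul hNc).integrable_of_hasCompactSupport hNs.mul_left
      have i2 : Integrable fun ξ => g ξ * N ξ :=
        (hgc.mul hNc).integrable_of_hasCompactSupport hNs.mul_left
      rw [← integral_add i1 i2]
      refine integral_congr_ae (ae_of_all _ fun ξ => ?_)
      by_cases hξ : ξ ∈ tsupport χ
      · simp only [hG, max_eq_right (htsupp ξ hξ)]; ring
      · simp only [hN, mixedHess_eq_zero_of_notMem hξ, mul_zero, add_zero]
    have e2 : ∫ ξ, P ξ * N ξ = ∫ ξ, χ ξ * (κ * Q ξ) := by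
      have := integral_mixedHess_symm sχ sP sF χs
      rw [mixedHess_comm χ, mixedHess_comm P] at this
      rw [hN, this]
      refine integral_congr_ae (ae_of_all _ fun ξ => ?_)
      simp only [hP, mixedHess_affine_add sS, hQ]
    have e3 : ∫ ξ, g ξ * N ξ = 0 := h.integral_eq_zero (by linarith) (by linarith) sχ χ0
    have iχ : Integrable χ := sχ.continuous.integrable_of_hasCompactSupport χs
    have e4 : ∫ ξ, χ ξ * (κ * Q ξ) ≤ -(κ * κ₁) * ∫ ξ, χ ξ := by
      rw [← integral_const_mul]
      refine integral_mono ((sχ.continuous.mul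
        (continuous_const.mul hQc)).integrable_of_hasCompactSupport χs.mul_right)
        (iχ.const_mul _) fun ξ => ?_
      rcases eq_or_ne (χ ξ) 0 with hξ | hξ
      · simp [hξ]
      · have h2 : dist ξ c < d₀ := by
          rw [dist_eq_norm]; exact (hpos ξ (χsupp ξ hξ)).trans_le (min_le_left _ _)
        have h3 := hd₀b h2
        have h4 : κ * Q ξ ≤ κ * -κ₁ := mul_le_mul_of_nonneg_left h3.le hκ0.le
        have h5 := mul_le_mul_of_nonneg_left h4 (χnn ξ)
        simp only
        linarith
    have e5 : ε / 4 * V ≤ ∫ ξ, χ ξ := by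
      calc ε / 4 * V = ∫ ξ in ball c δ₁, ε / 4 := by
            rw [setIntegral_const, smul_eq_mul, mul_comm]
        _ ≤ ∫ ξ in ball c δ₁, χ ξ := by
            refine setIntegral_mono_on (integrableOn_const measure_ball_lt_top.ne)
              iχ.integrableOn measurableSet_ball fun ξ hξ => ?_
            have h2 := hδ₁b (mem_ball.1 hξ)
            have h3 := (abs_le.1 (χψ ξ)).1
            have h4 : P ξ - g ξ - η ≤ ψ ξ := le_max_left _ _
            linarith
        _ ≤ ∫ ξ, χ ξ := setIntegral_le_integral iχ (ae_of_all _ χnn)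
    rw [e1, e2, e3, add_zero] at h1
    have h6 := mul_le_mul_of_nonneg_left e5 (mul_pos hκ0 hκ₁0).le
    rw [hX]
    linarith
  set η := min (ε / 8) (X / (4 * C + 1)) with hη
  have hη0 : 0 < η := lt_min (by positivity) (by positivity)
  have h1 := key η hη0 (min_le_left _ _)
  have h2 : η * (4 * C + 1) ≤ X := by
    rw [← le_div_iff₀ (by positivity)]; exact min_le_right _ _
  nlinarith [mul_nonneg hC hη0.le]

theorem isCompact_convexJoin {E : Type*} [NormedAddCommGroup E] [NormedSpace ℝ E] {s t : Set E}
    (hs : IsCompact s) (ht : IsCompact t) : IsCompact (convexJoin ℝ s t) := by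
  have hc : Continuous fun p : E × E × ℝ => (1 - p.2.2) • p.1 + p.2.2 • p.2.1 := by fun_prop
  convert (hs.prod (ht.prod (isCompact_Icc (a := (0 : ℝ)) (b := 1)))).image hc
  ext x
  rw [mem_convexJoin]
  constructor
  · rintro ⟨a, ha, b, hb, hx⟩
    rw [segment_eq_image] at hx
    obtain ⟨θ, hθ, rfl⟩ := hx
    exact ⟨(a, b, θ), ⟨ha, hb, hθ⟩, rfl⟩
  · rintro ⟨⟨a, b, θ⟩, ⟨ha, hb, hθ⟩, rfl⟩
    refine ⟨a, ha, b, hb, ?_⟩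
    rw [segment_eq_image]
    exact ⟨θ, hθ, rfl⟩

/-- An extreme point of a compact convex set can be strictly separated from the complement of any
of its neighbourhoods. -/
theorem exists_separating_of_mem_extremePoints {E : Type*} [NormedAddCommGroup E]
    [NormedSpace ℝ E] {K U : Set E} (hK : IsCompact K) (hKc : Convex ℝ K) {p : E}
    (hp : p ∈ K.extremePoints ℝ) (hU : IsOpen U) (hpU : p ∈ U) :
    ∃ (f : StrongDual ℝ E) (β : ℝ), (∀ a ∈ K \ U, f a < β) ∧ β < f p := by
  have hext := (mem_extremePoints_iff_forall_segment.1 hp).2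
  obtain ⟨T, -, hT, hTc, hpT, hKT⟩ : ∃ T ⊆ K, IsCompact T ∧ Convex ℝ T ∧ p ∉ T ∧ K \ U ⊆ T := by
    refine (hK.diff hU).induction_on
      (p := fun s => ∃ T ⊆ K, IsCompact T ∧ Convex ℝ T ∧ p ∉ T ∧ s ⊆ T) ?_ ?_ ?_ ?_
    · exact ⟨∅, empty_subset _, isCompact_empty, convex_empty, notMem_empty _, Subset.rfl⟩
    · rintro s t hst ⟨T, h1, h2, h3, h4, h5⟩
      exact ⟨T, h1, h2, h3, h4, hst.trans h5⟩
    · rintro s t ⟨T, h1, h2, h3, h4, h5⟩ ⟨T', h1', h2', h3', h4', h5'⟩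
      rcases T.eq_empty_or_nonempty with rfl | hTn
      · exact ⟨T', h1', h2', h3', h4', union_subset (h5.trans (empty_subset _)) h5'⟩
      rcases T'.eq_empty_or_nonempty with rfl | hTn'
      · exact ⟨T, h1, h2, h3, h4, union_subset h5 (h5'.trans (empty_subset _))⟩
      refine ⟨convexJoin ℝ T T', ?_, isCompact_convexJoin h2 h2', h3.convexJoin h3', ?_,
        union_subset (h5.trans (subset_convexJoin_left hTn'))
          (h5'.trans (subset_convexJoin_right hTn))⟩
      · intro x hx
        obtain ⟨a, ha, b, hb, hx⟩ := mem_convexJoin.1 hx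
        exact hKc.segment_subset (h1 ha) (h1' hb) hx
      · intro hx
        obtain ⟨a, ha, b, hb, hx⟩ := mem_convexJoin.1 hx
        rcases hext a (h1 ha) b (h1' hb) hx with rfl | rfl
        · exact h4 ha
        · exact h4' hb
    · intro x hx
      have hxp : 0 < dist x p := dist_pos.2 fun hh => hx.2 (hh ▸ hpU)
      refine ⟨closedBall x (dist x p / 2) ∩ (K \ U),
        inter_mem (mem_nhdsWithin_of_mem_nhds (closedBall_mem_nhds x (by positivity)))
          self_mem_nhdsWithin,
        K ∩ closedBall x (dist x p / 2), inter_subset_left, hK.inter_right isClosed_closedBall,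
        hKc.inter (convex_closedBall _ _), fun hh => ?_, fun y hy => ⟨hy.2.1, hy.1⟩⟩
      have := mem_closedBall.1 hh.2
      rw [dist_comm] at this
      linarith
  obtain ⟨f, β, h1, h2⟩ := geometric_hahn_banach_closed_point hTc hT.isClosed hpT
  exact ⟨f, β, fun a ha => h1 a (hKT ha), h2⟩

theorem gradient_eq_of_forall_le {u : E2 → ℝ} {x ξ : E2} (hx : x ∈ Omega)
    (hd : DifferentiableAt ℝ u x)
    (hmax : ∀ y ∈ Omega, u y - inner ℝ ξ y ≤ u x - inner ℝ ξ x) : gradient u x = ξ := by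
  have hl : IsLocalMax (fun y => u y - inner ℝ ξ y) x := by
    filter_upwards [isOpen_ball.mem_nhds hx] with y hy using hmax y hy
  have h1 := hl.hasFDerivAt_eq_zero (hd.hasFDerivAt.sub (innerSL ℝ ξ).hasFDerivAt)
  rw [gradient, sub_eq_zero.1 h1]
  exact (InnerProductSpace.toDual ℝ E2).symm_apply_apply ξ

section AssocBody

variable {M : ℝ} {u : E2 → ℝ}

theorem convex_assocBody (hu : ConcaveOn ℝ Omega u) : Convex ℝ (assocBody u) := by
  refine Convex.closure ?_
  rintro ⟨x, z⟩ ⟨hx, hz, hzx⟩ ⟨y, w⟩ ⟨hy, hw, hwy⟩ a b ha hb hab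
  simp only at hx hz hzx hy hw hwy
  refine ⟨hu.1 hx hy ha hb hab, ?_, ?_⟩
  · show 0 ≤ a * z + b * w
    positivity
  · have h1 := hu.2 hx hy ha hb hab
    have h2 := mul_le_mul_of_nonneg_left hzx ha
    have h3 := mul_le_mul_of_nonneg_left hwy hb
    simp only [smul_eq_mul] at h1
    show a * z + b * w ≤ u (a • x + b • y)
    linarith

theorem mem_assocBody {x : E2} {z : ℝ} (hx : x ∈ Omega) (hz : 0 ≤ z) (hzx : z ≤ u x) :
    (x, z) ∈ assocBody u := subset_closure ⟨hx, hz, hzx⟩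

theorem assocBody_subset (huM : ∀ x ∈ Omega, u x ∈ Icc 0 M) :
    assocBody u ⊆ closedBall 0 1 ×ˢ Icc 0 M := by
  refine closure_minimal ?_ (isClosed_closedBall.prod isClosed_Icc)
  rintro ⟨x, z⟩ ⟨hx, hz, hzx⟩
  exact ⟨ball_subset_closedBall hx, hz, hzx.trans (huM x hx).2⟩

theorem isCompact_assocBody (huM : ∀ x ∈ Omega, u x ∈ Icc 0 M) : IsCompact (assocBody u) :=
  ((isCompact_closedBall 0 1).prod isCompact_Icc).of_isClosed_subset isClosed_closure
    (assocBody_subset huM)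

theorem le_of_mem_assocBody (hu : ConcaveOn ℝ Omega u) {p : E2 × ℝ} (hp : p ∈ assocBody u)
    (hx : p.1 ∈ Omega) : p.2 ≤ u p.1 := by
  obtain ⟨s, hs, hst⟩ := mem_closure_iff_seq_limit.1 hp
  have hc : ContinuousAt u p.1 := (hu.continuousOn isOpen_ball).continuousAt (isOpen_ball.mem_nhds hx)
  have h1 : Tendsto (fun n => (s n).1) atTop (𝓝 p.1) := (continuous_fst.tendsto p).comp hst
  have h2 : Tendsto (fun n => (s n).2) atTop (𝓝 p.2) := (continuous_snd.tendsto p).comp hst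
  exact le_of_tendsto_of_tendsto' h2 (hc.tendsto.comp h1) fun n => (hs n).2.2

/-- An extreme point of the body on the graph over an open set of differentiability yields a ball
of normals exposing points of the graph. -/
theorem exists_dualSetup (hu : ConcaveOn ℝ Omega u) (huM : ∀ x ∈ Omega, u x ∈ Icc 0 M)
    (hmin : ∀ v : E2 → ℝ, ConcaveOn ℝ Omega v → (∀ x ∈ Omega, v x ∈ Icc 0 M) → J u ≤ J v)
    {W : Set E2} (hω : IsOpen W) (hωΩ : W ⊆ Omega) (hdiff : ∀ x ∈ W, DifferentiableAt ℝ u x)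
    {x₀ : E2} (hx₀ : x₀ ∈ W) (hext : (x₀, u x₀) ∈ (assocBody u).extremePoints ℝ) :
    ∃ g c R ρ m, DualSetup M u g c R ρ m := by
  have hK := isCompact_assocBody huM
  have hKc := convex_assocBody hu
  have hKsub := assocBody_subset huM
  have hx₀n : ‖x₀‖ < 1 := by simpa [Omega] using hωΩ hx₀
  obtain ⟨δ₀, hδ₀, hδ₀ω⟩ := Metric.isOpen_iff.1 hω x₀ hx₀
  set δ := min δ₀ ((1 - ‖x₀‖) / 2) with hδ
  have hδ0 : 0 < δ := lt_min hδ₀ (by linarith)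
  have hδW : ball x₀ δ ⊆ W := (ball_subset_ball (min_le_left _ _)).trans hδ₀ω
  have hδ2 : δ ≤ (1 - ‖x₀‖) / 2 := min_le_right _ _
  have hu0 : 0 < u x₀ := by
    refine lt_of_le_of_ne (huM x₀ (hωΩ hx₀)).1 fun h0 => ?_
    set w : E2 := EuclideanSpace.single 0 (δ / 2) with hw
    have hwn : ‖w‖ = δ / 2 := by
      rw [hw, PiLp.norm_single, Real.norm_of_nonneg (by positivity)]
    have hmem : ∀ y : E2, ‖y - x₀‖ = δ / 2 → (y, (0 : ℝ)) ∈ assocBody u := fun y hy => by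
      have hyΩ : y ∈ Omega := hωΩ (hδW (by rw [mem_ball, dist_eq_norm, hy]; linarith))
      exact mem_assocBody hyΩ le_rfl (huM y hyΩ).1
    have h1 := (mem_extremePoints.1 hext).2 (x₀ + w, 0) (hmem _ (by rw [add_sub_cancel_left, hwn]))
      (x₀ - w, 0) (hmem _ (by rw [sub_sub_cancel_left, norm_neg, hwn]))
      ⟨1 / 2, 1 / 2, by norm_num, by norm_num, by norm_num, by
        rw [← h0]
        ext1
        · show (1 / 2 : ℝ) • (x₀ + w) + (1 / 2 : ℝ) • (x₀ - w) = x₀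
          rw [← smul_add, add_add_sub_cancel, ← two_smul ℝ, smul_smul]; norm_num
        · simp⟩
    have h2 : x₀ + w = x₀ := congrArg Prod.fst h1.1
    have h3 : w = 0 := by simpa using h2
    rw [h3, norm_zero] at hwn
    linarith
  set U : Set (E2 × ℝ) := ball x₀ δ ×ˢ Ioi (u x₀ / 2) with hU
  have hUo : IsOpen U := isOpen_ball.prod isOpen_Ioi
  obtain ⟨f, β, hfβ, hβ⟩ := exists_separating_of_mem_extremePoints hK hKc hext hUo
    ⟨mem_ball_self hδ0, by simpa using hu0⟩
  have hflat : ∀ x ∈ Omega, (x, (0 : ℝ)) ∈ assocBody u \ U := fun x hx =>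
    ⟨mem_assocBody hx le_rfl (huM x hx).1, fun hh => by
      have : u x₀ / 2 < 0 := hh.2
      linarith⟩
  set τ := f (0, 1) with hτ
  set f₁ : StrongDual ℝ E2 := f.comp (ContinuousLinearMap.inl ℝ E2 ℝ) with hf₁
  set ζ : E2 := (InnerProductSpace.toDual ℝ E2).symm f₁ with hζ
  have hfform : ∀ p : E2 × ℝ, f p = inner ℝ ζ p.1 + τ * p.2 := fun p => by
    have e1 : p = (p.1, 0) + p.2 • ((0 : E2), (1 : ℝ)) := by ext <;> simp
    conv_lhs => rw [e1]
    rw [map_add, map_smul, hζ, InnerProductSpace.toDual_symm_apply, smul_eq_mul, hf₁, hτ, mul_comm]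
    rfl
  have hτ0 : 0 < τ := by
    have h1 := (hfβ _ (hflat x₀ (hωΩ hx₀))).trans hβ
    rw [hfform, hfform] at h1
    simp only [mul_zero, add_zero] at h1
    have h2 : 0 < τ * u x₀ := by linarith
    exact pos_of_mul_pos_left h2 hu0.le
  set ξ₁ : E2 := -(τ⁻¹ • ζ) with hξ₁
  have hξ₁f : ∀ p : E2 × ℝ, p.2 - inner ℝ ξ₁ p.1 = f p / τ := fun p => by
    rw [hfform, hξ₁, inner_neg_left, inner_smul_left]
    simp only [map_inv₀, RCLike.conj_to_real]
    field_simp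
    ring
  set κ := (f (x₀, u x₀) - β) / τ / 4 with hκ
  have hκ0 : 0 < κ := by
    have : 0 < f (x₀, u x₀) - β := by linarith
    positivity
  have hnorm : ∀ p ∈ assocBody u, ‖p.1‖ ≤ 1 := fun p hp => by simpa using (hKsub hp).1
  have hsep : ∀ ξ, ‖ξ - ξ₁‖ ≤ κ → ∀ p ∈ assocBody u \ U,
      p.2 - inner ℝ ξ p.1 + 2 * κ ≤ u x₀ - inner ℝ ξ x₀ := by
    intro ξ hξ p hp
    have h1 : p.2 - inner ℝ ξ₁ p.1 + 4 * κ ≤ u x₀ - inner ℝ ξ₁ x₀ := by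
      have e1 := hξ₁f (x₀, u x₀)
      simp only at e1
      rw [hξ₁f, e1, hκ, mul_div_cancel₀ _ (by norm_num : (4 : ℝ) ≠ 0), ← add_div]
      gcongr
      linarith [hfβ p hp]
    have hb : ∀ y : E2, ‖y‖ ≤ 1 → |inner ℝ (ξ - ξ₁) y| ≤ κ := fun y hy =>
      (abs_real_inner_le_norm _ _).trans (by
        calc ‖ξ - ξ₁‖ * ‖y‖ ≤ κ * 1 := by gcongr
          _ = κ := mul_one _)
    have h2 := (abs_le.1 (hb p.1 (hnorm p hp.1))).1
    have h3 := (abs_le.1 (hb x₀ hx₀n.le)).2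
    rw [inner_sub_left] at h2 h3
    linarith
  have hKne : (assocBody u).Nonempty := ⟨_, hext.1⟩
  choose Z hZK hZmax using fun ξ : E2 => hK.exists_isMaxOn hKne
    (f := fun p : E2 × ℝ => p.2 - inner ℝ ξ p.1)
    (by fun_prop : Continuous fun p : E2 × ℝ => p.2 - inner ℝ ξ p.1).continuousOn
  set g : E2 → ℝ := fun ξ => (Z ξ).2 - inner ℝ ξ (Z ξ).1 with hg
  have hgle : ∀ ξ, ∀ p ∈ assocBody u, p.2 - inner ℝ ξ p.1 ≤ g ξ := fun ξ p hp => hZmax ξ hp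
  have hsub : ∀ ξ η, g ξ - g η ≤ inner ℝ (Z ξ).1 (η - ξ) := fun ξ η => by
    have := hgle η _ (hZK ξ)
    rw [inner_sub_right, real_inner_comm η, real_inner_comm ξ]
    simp only [hg] at this ⊢
    linarith
  have hlip : ∀ (ρ : ℝ) ξ η, ‖(Z ξ).1‖ ≤ ρ → ‖(Z η).1‖ ≤ ρ → |g ξ - g η| ≤ ρ * ‖ξ - η‖ := by
    intro ρ ξ η h1 h2
    have hb : ∀ a b : E2, ‖a‖ ≤ ρ → inner ℝ a b ≤ ρ * ‖b‖ := fun a b hab =>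
      (real_inner_le_norm _ _).trans (by gcongr)
    rw [abs_le]
    constructor
    · linarith [hsub η ξ, hb _ (ξ - η) h2]
    · have := hb _ (η - ξ) h1
      rw [norm_sub_rev] at this
      linarith [hsub ξ η]
  have h0Ω : (0 : E2) ∈ Omega := mem_ball_self one_pos
  have hZU : ∀ ξ, ‖ξ - ξ₁‖ ≤ κ → Z ξ ∈ U := fun ξ hξ => by
    by_contra hh
    have h1 := hsep ξ hξ _ ⟨hZK ξ, hh⟩
    have h2 := hgle ξ _ hext.1
    simp only [hg] at h2
    linarith
  obtain ⟨c, hc0, hcξ⟩ : ∃ c : E2, c ≠ 0 ∧ ‖c - ξ₁‖ ≤ κ / 2 := by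
    by_cases hh : ξ₁ = 0
    · have hn : ‖(EuclideanSpace.single 0 (κ / 2) : E2)‖ = κ / 2 := by
        rw [PiLp.norm_single, Real.norm_of_nonneg (by positivity)]
      refine ⟨EuclideanSpace.single 0 (κ / 2), ?_, ?_⟩
      · rw [← norm_pos_iff, hn]; positivity
      · rw [hh, sub_zero, hn]
    · exact ⟨ξ₁, hh, by rw [sub_self, norm_zero]; positivity⟩
  have hcn : 0 < ‖c‖ := norm_pos_iff.2 hc0
  set R := min (κ / 2) (‖c‖ / 2) with hR
  have hball : ∀ ξ ∈ closedBall c R, ‖ξ - ξ₁‖ ≤ κ := fun ξ hξ => by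
    rw [mem_closedBall, dist_eq_norm] at hξ
    have h1 := norm_sub_le_norm_sub_add_norm_sub ξ c ξ₁
    have h2 : R ≤ κ / 2 := min_le_left _ _
    linarith
  have hρ : ∀ ξ ∈ closedBall c R, ‖(Z ξ).1‖ ≤ ‖x₀‖ + δ := fun ξ hξ => by
    have h1 : ‖(Z ξ).1 - x₀‖ < δ := by rw [← dist_eq_norm]; exact (hZU ξ (hball ξ hξ)).1
    have h2 := norm_add_le ((Z ξ).1 - x₀) x₀
    rw [sub_add_cancel] at h2
    linarith
  refine ⟨g, c, R, ‖x₀‖ + δ, 2 * κ, hu, fun x hx => (huM x hx).1, hmin, ?_, ?_, ?_, ?_, ?_, ?_, ?_,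
    by positivity, by linarith, by positivity, ?_, ?_, ?_, ?_, ?_⟩
  · refine ⟨convex_univ, fun ξ _ η _ a b ha hb hab => ?_⟩
    set p := Z (a • ξ + b • η) with hp
    have h1 := mul_le_mul_of_nonneg_left (hgle ξ p (hZK _)) ha
    have h2 := mul_le_mul_of_nonneg_left (hgle η p (hZK _)) hb
    have e1 : g (a • ξ + b • η) = p.2 - (a * inner ℝ ξ p.1 + b * inner ℝ η p.1) := by
      simp only [hg, ← hp, inner_add_left, inner_smul_left, RCLike.conj_to_real]
    have hb' : b = 1 - a := by linarith
    rw [e1, smul_eq_mul, smul_eq_mul]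
    subst hb'
    linarith
  · intro ξ η
    simpa using hlip 1 ξ η (hnorm _ (hZK _)) (hnorm _ (hZK _))
  · intro ξ
    have := hgle ξ _ (hflat 0 h0Ω).1
    simpa using this
  · have := (hKsub (hZK 0)).2.2
    simpa [hg] using this
  · intro x hx ξ
    have := hgle ξ _ (mem_assocBody hx (huM x hx).1 le_rfl)
    simp only at this
    linarith
  · intro x hx hd
    set ξ := gradient u x with hξ
    have hfd : ∀ y, fderiv ℝ u x y = inner ℝ ξ y := fun y => by simp [hξ, gradient]
    have hall : assocBody u ⊆ {p | p.2 - inner ℝ ξ p.1 ≤ u x - inner ℝ ξ x} := by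
      refine closure_minimal ?_ (isClosed_le (by fun_prop) continuous_const)
      rintro ⟨y, z⟩ ⟨hy, -, hzy⟩
      have h1 := ConvexOn.add_fderiv_le hu.neg hx hy hd.hasFDerivAt.neg
      simp only [Pi.neg_apply, neg_apply, hfd, inner_sub_right] at h1
      simp only [mem_ofPred_eq] at hzy ⊢
      linarith
    have := hall (hZK ξ)
    simp only [mem_ofPred_eq] at this
    simp only [hg]
    linarith
  · exact lt_min (by positivity) (by positivity)
  · intro ξ hξ η hη
    exact hlip _ ξ η (hρ ξ hξ) (hρ η hη)
  · intro ξ hξ x hx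
    have h1 := hsep ξ (hball ξ hξ) _ (hflat x hx)
    have h2 := hgle ξ _ hext.1
    simp only at h1 h2
    linarith
  · rw [mem_closedBall, dist_eq_norm, zero_sub, norm_neg]
    have : R ≤ ‖c‖ / 2 := min_le_right _ _
    linarith
  · intro ξ hξ
    set x := (Z ξ).1 with hx
    have hxω : x ∈ W := hδW (hZU ξ (hball ξ hξ)).1
    have hxΩ := hωΩ hxω
    have hgx : g ξ = u x - inner ℝ ξ x := by
      refine le_antisymm ?_ (hgle ξ (x, u x) (mem_assocBody hxΩ (huM x hxΩ).1 le_rfl))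
      have := le_of_mem_assocBody hu (hZK ξ) hxΩ
      simp only [hg, ← hx]
      linarith
    have hgrad : ∀ η, g η ≤ u x - inner ℝ η x → gradient u x = η := fun η hη =>
      gradient_eq_of_forall_le hxΩ (hdiff x hxω) fun y hy =>
        (hgle η (y, u y) (mem_assocBody hy (huM y hy).1 le_rfl)).trans hη
    refine ⟨-x, fun η hη => ?_⟩
    by_contra! hle
    rw [hgx, inner_neg_left, inner_sub_right, real_inner_comm η, real_inner_comm ξ] at hle
    exact hη ((hgrad η (by linarith)).symm.trans (hgrad ξ hgx.le))
  · intro ξ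
    refine ⟨-(Z ξ).1, fun η => ?_⟩
    rw [inner_neg_left]
    linarith [hsub ξ η]

end AssocBody

end

/-- The graph of a minimizer above any open set of differentiability contains
no extreme points of the associated convex body `K`. -/
theorem minimizer_graph_no_extreme_points (M : ℝ) (hM : 0 < M)
    (u : EuclideanSpace ℝ (Fin 2) → ℝ)
    (hu : ConcaveOn ℝ Omega u) (huM : ∀ x ∈ Omega, u x ∈ Icc 0 M)
    (hmin : ∀ v : EuclideanSpace ℝ (Fin 2) → ℝ,
      ConcaveOn ℝ Omega v → (∀ x ∈ Omega, v x ∈ Icc 0 M) → J u ≤ J v)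
    (ω : Set (EuclideanSpace ℝ (Fin 2))) (hω : IsOpen ω) (hωΩ : ω ⊆ Omega)
    (hdiff : ∀ x ∈ ω, DifferentiableAt ℝ u x) :
    ∀ x ∈ ω, (x, u x) ∉ Set.extremePoints ℝ (assocBody u) := by
  intro x hx hext
  obtain ⟨g, c, R, ρ, m, h⟩ := exists_dualSetup hu huM hmin hω hωΩ hdiff hx hext
  exact h.false
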